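/- arXiv:2507.01969 — 15 statements merged into one kernel-verified Lean document; each statement's English description precedes it below -/
import Mathlib

section
/- Let Γ_A = (A, α), Γ_B = (B, β) and Γ_C = (C, γ) be cooperative games on pairwise disjoint finite player sets, let i ∈ A and j ∈ B. Then the sequential axiom holds for the partial composition of games: (Γ_A ∘_i Γ_B) ∘_j Γ_C = Γ_A ∘_i (Γ_B ∘_j Γ_C); that is, both composite games have the same player set ((A ∖ {i}) ∪ (B ∖ {j})) ∪ C and their coalition functions agree on every subset of it. -/
open Finset

/-- The discrete derivative of a coalition function `v` at player `i`:
`∂ᵢ v (S) = v (S ∪ {i}) − v (S ∖ {i})`. -/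
noncomputable def gameDeriv {ι : Type*} [DecidableEq ι]
    (v : Finset ι → ℝ) (i : ι) (S : Finset ι) : ℝ :=
  v (insert i S) - v (S.erase i)

/-- The coalition function of the partial composition `Γ_A ∘ᵢ Γ_B` of the game `(A, α)`
with the game `(B, β)` at player `i ∈ A`:
`(α ∘ᵢ β)(S) = β(B)·α(S ∩ A) + ∂ᵢα(S ∩ A)·β(S ∩ B)`. -/
noncomputable def gameComp {ι : Type*} [DecidableEq ι]
    (A B : Finset ι) (i : ι) (α β : Finset ι → ℝ) (S : Finset ι) : ℝ :=
  β B * α (S ∩ A) + gameDeriv α i (S ∩ A) * β (S ∩ B)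

/-- The sequential axiom for the partial composition of cooperative games:
`(Γ_A ∘ᵢ Γ_B) ∘ⱼ Γ_C = Γ_A ∘ᵢ (Γ_B ∘ⱼ Γ_C)` for `i ∈ A`, `j ∈ B`. -/
theorem sequential_axiom {ι : Type*} [DecidableEq ι]
    (A B C : Finset ι) (α β γ : Finset ι → ℝ)
    (hAB : Disjoint A B) (hAC : Disjoint A C) (hBC : Disjoint B C)
    (hα0 : α ∅ = 0) (hβ0 : β ∅ = 0) (hγ0 : γ ∅ = 0)
    (i : ι) (hi : i ∈ A) (j : ι) (hj : j ∈ B) :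
    ((A.erase i ∪ B).erase j ∪ C = A.erase i ∪ (B.erase j ∪ C)) ∧
    (∀ S ⊆ (A.erase i ∪ B).erase j ∪ C,
      gameComp (A.erase i ∪ B) C j (gameComp A B i α β) γ S =
        gameComp A (B.erase j ∪ C) i α (gameComp B C j β γ) S) := by
  rw [Finset.disjoint_left] at hAB hAC hBC
  have hjA : j ∉ A := fun h => hAB h hj
  have hjC : j ∉ C := hBC hj
  refine ⟨by ext x; simp only [mem_union, mem_erase]; grind, fun S hS => ?_⟩
  have hS' : ∀ x ∈ S, ((x ≠ i ∧ x ∈ A) ∨ (x ≠ j ∧ x ∈ B)) ∨ x ∈ C := by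
    intro x hx
    have := hS hx
    simp only [mem_union, mem_erase] at this
    tauto
  have hiS : i ∉ S := fun h => by have := hS' i h; grind
  have hjS : j ∉ S := fun h => by have := hS' j h; grind
  have e1 : S ∩ (A.erase i ∪ B) ∩ A = S ∩ A := by ext x; grind
  have e2 : S ∩ (A.erase i ∪ B) ∩ B = S ∩ B := by ext x; grind
  have e3 : insert j (S ∩ (A.erase i ∪ B)) ∩ A = S ∩ A := by ext x; grind
  have e4 : insert j (S ∩ (A.erase i ∪ B)) ∩ B = insert j (S ∩ B) := by ext x; grind
  have e5 : (S ∩ (A.erase i ∪ B)).erase j ∩ A = S ∩ A := by ext x; grind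
  have e6 : (S ∩ (A.erase i ∪ B)).erase j ∩ B = (S ∩ B).erase j := by ext x; grind
  have f1 : S ∩ (B.erase j ∪ C) ∩ B = S ∩ B := by ext x; grind
  have f2 : S ∩ (B.erase j ∪ C) ∩ C = S ∩ C := by ext x; grind
  have f3 : (B.erase j ∪ C) ∩ B = B.erase j := by ext x; grind
  have f4 : (B.erase j ∪ C) ∩ C = C := by ext x; grind
  have f5 : insert j (B.erase j) = B := insert_erase hj
  have f6 : (B.erase j).erase j = B.erase j := by ext x; grind
  simp only [gameComp, gameDeriv, e1, e2, e3, e4, e5, e6, f1, f2, f3, f4, f5, f6]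
  ring
end

section
/- Let Γ_A = (A, α), Γ_B = (B, β) and Γ_C = (C, γ) be cooperative games on pairwise disjoint finite player sets, and let i, k ∈ A be two distinct players. Then the parallel axiom holds for the partial composition of games: (Γ_A ∘_i Γ_B) ∘_k Γ_C = (Γ_A ∘_k Γ_C) ∘_i Γ_B; that is, both composite games have the same player set ((A ∖ {i, k}) ∪ B ∪ C) and their coalition functions agree on every subset of it. -/
open Finset

/-- Explicit form of the iterated composition on coalitions avoiding `i` and `k`. -/
theorem gameComp_comp_explicit {ι : Type*} [DecidableEq ι]
    (A B C : Finset ι) (α β γ : Finset ι → ℝ)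
    (hAB : Disjoint A B) (i k : ι) (hi : i ∈ A) (hk : k ∈ A) (hik : i ≠ k)
    (S : Finset ι) (hiS : i ∉ S) (hkS : k ∉ S) :
    gameComp (A.erase i ∪ B) C k (gameComp A B i α β) γ S =
      γ C * (β B * α (S ∩ A) + (α (insert i (S ∩ A)) - α (S ∩ A)) * β (S ∩ B)) +
      ((β B * α (insert k (S ∩ A)) +
        (α (insert i (insert k (S ∩ A))) - α (insert k (S ∩ A))) * β (S ∩ B)) -
       (β B * α (S ∩ A) + (α (insert i (S ∩ A)) - α (S ∩ A)) * β (S ∩ B))) * γ (S ∩ C) := by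
  have hd : ∀ x, x ∈ A → x ∉ B := fun x hx => Finset.disjoint_left.mp hAB hx
  have h1 : (S ∩ (A.erase i ∪ B)) ∩ A = S ∩ A := by ext x; grind
  have h2 : (S ∩ (A.erase i ∪ B)) ∩ B = S ∩ B := by ext x; grind
  have h3 : (S ∩ (A.erase i ∪ B)).erase k = S ∩ (A.erase i ∪ B) := by ext x; grind
  have h4 : (insert k (S ∩ (A.erase i ∪ B))) ∩ A = insert k (S ∩ A) := by ext x; grind
  have h5 : (insert k (S ∩ (A.erase i ∪ B))) ∩ B = S ∩ B := by ext x; grind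
  have h6 : (S ∩ A).erase i = S ∩ A := by ext x; grind
  have h7 : (insert k (S ∩ A)).erase i = insert k (S ∩ A) := by ext x; grind
  simp only [gameComp, gameDeriv, h1, h2, h3, h4, h5, h6, h7]

/-- The parallel axiom for the partial composition of cooperative games:
`(Γ_A ∘ᵢ Γ_B) ∘ₖ Γ_C = (Γ_A ∘ₖ Γ_C) ∘ᵢ Γ_B` for distinct `i, k ∈ A`; both composite
games have the player set `(A ∖ {i,k}) ∪ B ∪ C`. -/
theorem parallel_axiom {ι : Type*} [DecidableEq ι]
    (A B C : Finset ι) (α β γ : Finset ι → ℝ)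
    (hAB : Disjoint A B) (hAC : Disjoint A C) (hBC : Disjoint B C)
    (hα0 : α ∅ = 0) (hβ0 : β ∅ = 0) (hγ0 : γ ∅ = 0)
    (i k : ι) (hi : i ∈ A) (hk : k ∈ A) (hik : i ≠ k) :
    ((A.erase i ∪ B).erase k ∪ C = (A \ {i, k}) ∪ B ∪ C) ∧
    ((A.erase k ∪ C).erase i ∪ B = (A \ {i, k}) ∪ B ∪ C) ∧
    (∀ S ⊆ (A \ {i, k}) ∪ B ∪ C,
      gameComp (A.erase i ∪ B) C k (gameComp A B i α β) γ S =
        gameComp (A.erase k ∪ C) B i (gameComp A C k α γ) β S) := by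
  have hdB : ∀ x, x ∈ A → x ∉ B := fun x hx => Finset.disjoint_left.mp hAB hx
  have hdC : ∀ x, x ∈ A → x ∉ C := fun x hx => Finset.disjoint_left.mp hAC hx
  refine ⟨by ext x; grind, by ext x; grind, fun S hS => ?_⟩
  have hiS : i ∉ S := fun h => by have := hS h; grind
  have hkS : k ∉ S := fun h => by have := hS h; grind
  rw [gameComp_comp_explicit A B C α β γ hAB i k hi hk hik S hiS hkS,
    gameComp_comp_explicit A C B α γ β hAC k i hk hi hik.symm S hkS hiS,
    Finset.insert_comm k i]
  ring
end

section
/- Let A and B be disjoint finite player sets, let i ∈ A, and let S ⊆ A and T ⊆ B be nonempty coalitions. Then the partial composition of the corresponding unanimity games is again a unanimity game: u_S ∘_i u_T = u_{S ⋄_i T}, where S ⋄_i T = (S ∖ {i}) ∪ T if i ∈ S, and S ⋄_i T = S if i ∉ S. -/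
open Finset

/-- The unanimity game `u_S` : `u_S(T) = 1` if `S ⊆ T` and `0` otherwise. -/
noncomputable def unanimity {ι : Type*} [DecidableEq ι] (S : Finset ι) (T : Finset ι) : ℝ :=
  if S ⊆ T then 1 else 0

/-- The partial composition of unanimity games is a unanimity game:
`u_S ∘ᵢ u_T = u_{S ⋄ᵢ T}`, where `S ⋄ᵢ T = (S ∖ {i}) ∪ T` if `i ∈ S` and `S ⋄ᵢ T = S`
otherwise, as games on the composite player set `(A ∖ {i}) ∪ B`. -/
theorem unanimity_comp {ι : Type*} [DecidableEq ι]
    (A B : Finset ι) (hAB : Disjoint A B) (i : ι) (hi : i ∈ A)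
    (S T : Finset ι) (hS : S ⊆ A) (hT : T ⊆ B) (hSne : S.Nonempty) (hTne : T.Nonempty) :
    ∀ K ⊆ A.erase i ∪ B,
      gameComp A B i (unanimity S) (unanimity T) K =
        unanimity (if i ∈ S then S.erase i ∪ T else S) K := by
  intro K hK
  have hiK : i ∉ K := by
    intro h
    have h2 := hK h
    rw [Finset.mem_union] at h2
    rcases h2 with h2 | h2
    · simp at h2
    · exact Finset.disjoint_left.mp hAB hi h2
  have e0 : (K ∩ A).erase i = K ∩ A :=
    Finset.erase_eq_of_notMem (fun h => hiK (Finset.mem_inter.mp h).1)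
  have e1 : S ⊆ K ∩ A ↔ S ⊆ K := by
    rw [Finset.subset_inter_iff]; exact and_iff_left hS
  have e2 : T ⊆ K ∩ B ↔ T ⊆ K := by
    rw [Finset.subset_inter_iff]; exact and_iff_left hT
  have e3 : S ⊆ insert i (K ∩ A) ↔ S.erase i ⊆ K := by
    rw [Finset.subset_insert_iff, Finset.subset_inter_iff]
    exact and_iff_left ((Finset.erase_subset i S).trans hS)
  simp only [gameComp, gameDeriv, unanimity, e0, e1, e2, e3, if_pos hT]
  by_cases his : i ∈ S
  · have hn : ¬ S ⊆ K := fun h => hiK (h his)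
    simp only [if_pos his, if_neg hn, Finset.union_subset_iff]
    by_cases h1 : S.erase i ⊆ K <;> by_cases h2 : T ⊆ K <;> simp [h1, h2]
  · simp only [if_neg his, Finset.erase_eq_of_notMem his]
    ring
end

section
/- Let Γ_A = (A, α) and Γ_B = (B, β) be cooperative games on disjoint finite player sets and let i ∈ A. Then the Möbius transform of the composite game Γ_A ∘_i Γ_B is given, for every nonempty coalition K ⊆ (A ∖ {i}) ∪ B, by: μ^{α ∘_i β}(K) = β(B) · μ^α(K) if K ∩ B = ∅, and μ^{α ∘_i β}(K) = μ^α((K ∩ A) ∪ {i}) · μ^β(K ∩ B) if K ∩ B ≠ ∅. (In other words, the Möbius transform intertwines the partial composition of games with the partial composition written in the basis of unanimity games.) -/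
open Finset

/-- The Möbius transform of a coalition function:
`μ^v(S) = Σ_{T ⊆ S} (−1)^{|S ∖ T|} v(T)`. -/
noncomputable def mobius {ι : Type*} [DecidableEq ι]
    (v : Finset ι → ℝ) (S : Finset ι) : ℝ :=
  ∑ T ∈ S.powerset, (-1 : ℝ) ^ (S.card - T.card) * v T

/-- The Möbius transform of a product on a disjoint union factors. -/
theorem mobius_prod {ι : Type*} [DecidableEq ι] (f g : Finset ι → ℝ) (P Q : Finset ι)
    (h : Disjoint P Q) :
    mobius (fun T => f (T ∩ P) * g (T ∩ Q)) (P ∪ Q) = mobius f P * mobius g Q := by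
  unfold mobius
  rw [Finset.sum_mul_sum, ← Finset.sum_product']
  refine Finset.sum_bij' (fun T _ => (T ∩ P, T ∩ Q)) (fun p _ => p.1 ∪ p.2) ?_ ?_ ?_ ?_ ?_
  · intro T _
    simp [Finset.inter_subset_right]
  · intro p hp
    simp only [Finset.mem_product, Finset.mem_powerset] at hp ⊢
    exact Finset.union_subset_union hp.1 hp.2
  · intro T hT
    rw [Finset.mem_powerset] at hT
    simp only
    rw [← Finset.inter_union_distrib_left, Finset.inter_eq_left.2 hT]
  · rintro ⟨X, Y⟩ hp
    simp only [Finset.mem_product, Finset.mem_powerset] at hp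
    obtain ⟨hX, hY⟩ := hp
    have h1 : Y ∩ P = ∅ := (Finset.disjoint_iff_inter_eq_empty.1 (h.mono_right hY).symm)
    have h2 : X ∩ Q = ∅ := (Finset.disjoint_iff_inter_eq_empty.1 (h.mono_left hX))
    simp [Finset.union_inter_distrib_right, h1, h2, Finset.inter_eq_left.2 hX,
      Finset.inter_eq_left.2 hY]
  · intro T hT
    rw [Finset.mem_powerset] at hT
    have hc : T.card = (T ∩ P).card + (T ∩ Q).card := by
      rw [← Finset.card_union_of_disjoint
        (h.mono Finset.inter_subset_right Finset.inter_subset_right),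
        ← Finset.inter_union_distrib_left, Finset.inter_eq_left.2 hT]
    have hP : (T ∩ P).card ≤ P.card := Finset.card_le_card Finset.inter_subset_right
    have hQ : (T ∩ Q).card ≤ Q.card := Finset.card_le_card Finset.inter_subset_right
    have he : (P ∪ Q).card - T.card
        = (P.card - (T ∩ P).card) + (Q.card - (T ∩ Q).card) := by
      rw [Finset.card_union_of_disjoint h]; omega
    rw [he, pow_add]
    ring

/-- Recursion for the Möbius transform. -/
theorem mobius_insert {ι : Type*} [DecidableEq ι] (v : Finset ι → ℝ) (i : ι) (P : Finset ι)
    (h : i ∉ P) : mobius v (insert i P) = mobius (gameDeriv v i) P := by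
  unfold mobius gameDeriv
  rw [Finset.sum_powerset_insert h, ← Finset.sum_add_distrib]
  refine Finset.sum_congr rfl fun T hT => ?_
  rw [Finset.mem_powerset] at hT
  have hiT : i ∉ T := fun hh => h (hT hh)
  have hc := Finset.card_le_card hT
  rw [Finset.card_insert_of_notMem h, Finset.card_insert_of_notMem hiT,
    Finset.erase_eq_of_notMem hiT, Nat.add_sub_add_right, Nat.sub_add_comm hc, pow_succ]
  ring

theorem mobius_one {ι : Type*} [DecidableEq ι] (Q : Finset ι) (h : Q.Nonempty) :
    mobius (fun _ => 1) Q = 0 := by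
  obtain ⟨q, hq⟩ := h
  rw [← Finset.insert_erase hq, mobius_insert _ _ _ (Finset.notMem_erase q Q)]
  simp [mobius, gameDeriv]

/-- The Möbius transform of a composite game: for a nonempty coalition `K` of the
composite player set, `μ^{α ∘ᵢ β}(K) = β(B)·μ^α(K)` when `K ∩ B = ∅`, and
`μ^{α ∘ᵢ β}(K) = μ^α((K ∩ A) ∪ {i})·μ^β(K ∩ B)` when `K ∩ B ≠ ∅`. -/
theorem mobius_comp {ι : Type*} [DecidableEq ι]
    (A B : Finset ι) (α β : Finset ι → ℝ)
    (hAB : Disjoint A B) (hα0 : α ∅ = 0) (hβ0 : β ∅ = 0)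
    (i : ι) (hi : i ∈ A) :
    ∀ K, K ⊆ A.erase i ∪ B → K.Nonempty →
      (K ∩ B = ∅ → mobius (gameComp A B i α β) K = β B * mobius α K) ∧
      (K ∩ B ≠ ∅ →
        mobius (gameComp A B i α β) K = mobius α (insert i (K ∩ A)) * mobius β (K ∩ B)) := by
  intro K hK _
  constructor
  · intro hKB
    unfold mobius
    rw [Finset.mul_sum]
    refine Finset.sum_congr rfl fun T hT => ?_
    rw [Finset.mem_powerset] at hT
    have hTB : T ∩ B = ∅ :=
      Finset.subset_empty.1 (hKB ▸ Finset.inter_subset_inter_right hT)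
    have hTA : T ∩ A = T := by
      rw [Finset.inter_eq_left]
      intro x hx
      rcases Finset.mem_union.1 (hK (hT hx)) with h | h
      · exact Finset.mem_of_mem_erase h
      · have : x ∈ T ∩ B := Finset.mem_inter.2 ⟨hx, h⟩
        simp [hTB] at this
    simp only [gameComp, hTB, hTA, hβ0]
    ring
  · intro hKB
    have hiK : i ∉ K ∩ A := by
      intro h
      rcases Finset.mem_union.1 (hK (Finset.mem_inter.1 h).1) with h' | h'
      · simp at h'
      · exact Finset.disjoint_left.1 hAB hi h'
    have hd : Disjoint (K ∩ A) (K ∩ B) :=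
      hAB.mono Finset.inter_subset_right Finset.inter_subset_right
    have hu : K ∩ A ∪ K ∩ B = K := by
      rw [← Finset.inter_union_distrib_left, Finset.inter_eq_left]
      exact hK.trans (Finset.union_subset_union_left (Finset.erase_subset _ _))
    have h1 := mobius_prod α (fun _ => 1) (K ∩ A) (K ∩ B) hd
    have h2 := mobius_prod (gameDeriv α i) β (K ∩ A) (K ∩ B) hd
    rw [mobius_one _ (Finset.nonempty_iff_ne_empty.2 hKB), mul_zero, hu] at h1
    rw [hu, ← mobius_insert α i _ hiK] at h2
    rw [← h2]
    have h3 : mobius (gameComp A B i α β) K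
        = β B * mobius (fun T => α (T ∩ (K ∩ A)) * 1) K
          + mobius (fun T => gameDeriv α i (T ∩ (K ∩ A)) * β (T ∩ (K ∩ B))) K := by
      unfold mobius
      rw [Finset.mul_sum, ← Finset.sum_add_distrib]
      refine Finset.sum_congr rfl fun T hT => ?_
      rw [Finset.mem_powerset] at hT
      beta_reduce
      rw [← Finset.inter_assoc, ← Finset.inter_assoc, Finset.inter_eq_left.2 hT]
      unfold gameComp
      ring
    rw [h3, h1]
    ring
end

section
/- Let Γ_A = (A, α) and Γ_B = (B, β) be cooperative games on disjoint finite player sets, let i ∈ A, and let j ∈ (A ⋄_i B). Then for every coalition S ⊆ (A ⋄_i B) ∖ {j}: if j ∈ A ∖ {i}, then ∂_j(α ∘_i β)(S) = β(B)·∂_j α(S_A) + ∂_j ∂_i α(S_A)·β(S_B); and if j ∈ B, then ∂_j(α ∘_i β)(S) = ∂_i α(S_A)·∂_j β(S_B), where S_A = S ∩ A and S_B = S ∩ B. -/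
open Finset

/-- Derivative of a composite game at a player `j` of the composite player set:
if `j ∈ A ∖ {i}` then `∂ⱼ(α ∘ᵢ β)(S) = β(B)·∂ⱼα(S_A) + ∂ⱼ∂ᵢα(S_A)·β(S_B)`, and
if `j ∈ B` then `∂ⱼ(α ∘ᵢ β)(S) = ∂ᵢα(S_A)·∂ⱼβ(S_B)`. -/
theorem gameDeriv_gameComp {ι : Type*} [DecidableEq ι]
    (A B : Finset ι) (α β : Finset ι → ℝ)
    (hAB : Disjoint A B) (hα0 : α ∅ = 0) (hβ0 : β ∅ = 0)
    (i : ι) (hi : i ∈ A) (j : ι) (hj : j ∈ A.erase i ∪ B) :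
    ∀ S ⊆ (A.erase i ∪ B).erase j,
      (j ∈ A.erase i →
        gameDeriv (gameComp A B i α β) j S =
          β B * gameDeriv α j (S ∩ A) + gameDeriv (gameDeriv α i) j (S ∩ A) * β (S ∩ B)) ∧
      (j ∈ B →
        gameDeriv (gameComp A B i α β) j S =
          gameDeriv α i (S ∩ A) * gameDeriv β j (S ∩ B)) := by
  have key1 : ∀ (S C : Finset ι), j ∈ C →
      insert j S ∩ C = insert j (S ∩ C) ∧ S.erase j ∩ C = (S ∩ C).erase j := by
    intro S C h
    constructor <;> ext x <;> simp only [mem_inter, mem_insert, mem_erase] <;> grind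
  have key2 : ∀ (S C : Finset ι), j ∉ C →
      insert j S ∩ C = S ∩ C ∧ S.erase j ∩ C = S ∩ C := by
    intro S C h
    constructor <;> ext x <;> simp only [mem_inter, mem_insert, mem_erase] <;> grind
  intro S _
  constructor
  · intro h
    have hA : j ∈ A := mem_of_mem_erase h
    have hB : j ∉ B := disjoint_left.mp hAB hA
    rw [gameDeriv, gameComp, gameComp, (key1 S A hA).1, (key1 S A hA).2,
      (key2 S B hB).1, (key2 S B hB).2, gameDeriv.eq_1 α j, gameDeriv.eq_1 (gameDeriv α i) j]
    ring
  · intro hB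
    have hA : j ∉ A := disjoint_right.mp hAB hB
    rw [gameDeriv, gameComp, gameComp, (key1 S B hB).1, (key1 S B hB).2,
      (key2 S A hA).1, (key2 S A hA).2, gameDeriv.eq_1 β j]
    ring
end

section
/- Let Γ_A = (A, α) and Γ_B = (B, β) be cooperative games on disjoint finite player sets and let i ∈ A. Then the duality involution commutes with the partial composition of games: (α ∘_i β)* = α* ∘_i β* as coalition functions on subsets of A ⋄_i B, i.e. (Γ_A ∘_i Γ_B)* = Γ_A* ∘_i Γ_B*. -/
open Finset

/-- The dual game of the game `(N, v)` : `v*(S) = v(N) − v(N ∖ S)`. -/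
noncomputable def dualGame {ι : Type*} [DecidableEq ι]
    (N : Finset ι) (v : Finset ι → ℝ) (S : Finset ι) : ℝ :=
  v N - v (N \ S)

/-- Duality commutes with partial composition: `(α ∘ᵢ β)* = α* ∘ᵢ β*` on coalitions
of the composite player set `A ⋄ᵢ B = (A ∖ {i}) ∪ B`. -/
theorem dualGame_gameComp {ι : Type*} [DecidableEq ι]
    (A B : Finset ι) (α β : Finset ι → ℝ)
    (hAB : Disjoint A B) (hα0 : α ∅ = 0) (hβ0 : β ∅ = 0)
    (i : ι) (hi : i ∈ A) :
    ∀ S ⊆ A.erase i ∪ B,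
      dualGame (A.erase i ∪ B) (gameComp A B i α β) S =
        gameComp A B i (dualGame A α) (dualGame B β) S := by
  intro S hS
  have hd : ∀ x, x ∈ A → x ∉ B := fun x hx hb => Finset.disjoint_left.mp hAB hx hb
  have hiB : i ∉ B := hd i hi
  have hiS : i ∉ S := fun h => by
    have := hS h
    simp [hiB] at this
  have e1 : (A.erase i ∪ B) ∩ A = A.erase i := by grind
  have e2 : (A.erase i ∪ B) ∩ B = B := by grind
  have e3 : ((A.erase i ∪ B) \ S) ∩ A = A.erase i \ S := by grind
  have e4 : ((A.erase i ∪ B) \ S) ∩ B = B \ S := by grind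
  have e5 : A \ (S ∩ A) = insert i (A.erase i \ S) := by grind
  have e6 : A \ insert i (S ∩ A) = A.erase i \ S := by grind
  have e7 : (S ∩ A).erase i = S ∩ A := by grind
  have e8 : B \ (S ∩ B) = B \ S := by grind
  have e9 : (A.erase i).erase i = A.erase i := by grind
  have e10 : (A.erase i \ S).erase i = A.erase i \ S := by grind
  simp only [dualGame, gameComp, gameDeriv, e1, e2, e3, e4, e7, e8, e5, e6, e9, e10,
    Finset.insert_erase hi, Finset.sdiff_self, hβ0]
  ring
end

section
/- Let Γ_A = (A, α) and Γ_B = (B, β) be cooperative games on disjoint finite player sets and let i ∈ A. Fix an enumeration (a_1, …, a_n) of A with a_{i₀} = i for some index i₀, and an enumeration (b_1, …, b_m) of B, and let m^σ(α) and m^τ(β) be the corresponding marginal vectors of Γ_A and Γ_B. Then the partial tensor product m^σ(α) ⊗_i m^τ(β) is a marginal vector of the composite game Γ_A ∘_i Γ_B; namely, it is the marginal vector associated with the enumeration (a_1, …, a_{i₀−1}, b_1, …, b_m, a_{i₀+1}, …, a_n) of A ⋄_i B. -/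
open Finset

/-- The marginal vector of a game `v` associated with an enumeration `l` of its
player set: the coordinate of player `j` is
`v({c_1, …, c_p}) − v({c_1, …, c_{p−1}})` where `j = c_p` in `l`. -/
noncomputable def marginalVec {ι : Type*} [DecidableEq ι]
    (v : Finset ι → ℝ) (l : List ι) (j : ι) : ℝ :=
  v (insert j (l.takeWhile (fun a => decide (a ≠ j))).toFinset) -
    v (l.takeWhile (fun a => decide (a ≠ j))).toFinset

/-- The partial tensor product of `x ∈ ℝ^A` and `y ∈ ℝ^B` at `i ∈ A`:
`(x ⊗ᵢ y)_j = (Σ_{l ∈ B} y_l)·x_j` for `j ∈ A ∖ {i}` and `(x ⊗ᵢ y)_j = x_i·y_j`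
for `j ∈ B`. -/
noncomputable def ptensor {ι : Type*} [DecidableEq ι]
    (B : Finset ι) (i : ι) (x y : ι → ℝ) (j : ι) : ℝ :=
  if j ∈ B then x i * y j else (∑ l ∈ B, y l) * x j

theorem takeWhile_split {ι : Type*} [DecidableEq ι] (p q : List ι) (j : ι) (hj : j ∉ p) :
    (p ++ j :: q).takeWhile (fun a => decide (a ≠ j)) = p := by
  induction p with
  | nil => simp
  | cons a p ih =>
    simp only [List.mem_cons, not_or] at hj
    have h1 : a ≠ j := fun h => hj.1 h.symm
    rw [List.cons_append, List.takeWhile_cons_of_pos (by simpa using h1), ih hj.2]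

theorem dropWhile_split {ι : Type*} [DecidableEq ι] (p q : List ι) (j : ι) (hj : j ∉ p) :
    (p ++ j :: q).dropWhile (fun a => decide (a ≠ j)) = j :: q := by
  induction p with
  | nil => simp
  | cons a p ih =>
    simp only [List.mem_cons, not_or] at hj
    have h1 : a ≠ j := fun h => hj.1 h.symm
    rw [List.cons_append, List.dropWhile_cons_of_pos (by simpa using h1), ih hj.2]

theorem marginalVec_split {ι : Type*} [DecidableEq ι] (v : Finset ι → ℝ)
    (p q : List ι) (j : ι) (hj : j ∉ p) :
    marginalVec v (p ++ j :: q) j = v (insert j p.toFinset) - v p.toFinset := by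
  unfold marginalVec
  rw [takeWhile_split p q j hj]

theorem marginalVec_sum {ι : Type*} [DecidableEq ι] (v : Finset ι → ℝ)
    (l : List ι) (hl : l.Nodup) :
    ∑ j ∈ l.toFinset, marginalVec v l j = v l.toFinset - v ∅ := by
  induction l using List.reverseRecOn with
  | nil => simp
  | append_singleton l a ih =>
    have hn : l.Nodup ∧ a ∉ l := by
      rw [List.nodup_append] at hl
      exact ⟨hl.1, fun h => hl.2.2 a h a (by simp) rfl⟩
    have e : (l ++ [a]).toFinset = insert a l.toFinset := by
      ext x; simp
    rw [e, Finset.sum_insert (by simpa using hn.2), marginalVec_split v l [] a hn.2]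
    have : ∑ j ∈ l.toFinset, marginalVec v (l ++ [a]) j = ∑ j ∈ l.toFinset, marginalVec v l j := by
      apply Finset.sum_congr rfl
      intro j hj
      obtain ⟨p, q, rfl, hp⟩ := List.eq_append_cons_of_mem (List.mem_toFinset.1 hj)
      rw [marginalVec_split v p q j hp, List.append_assoc, List.cons_append,
        marginalVec_split v p _ j hp]
    rw [this, ih hn.1]
    ring

/-- The partial tensor product of marginal vectors of the components is a marginal
vector of the composite game: it is the marginal vector associated with the
enumeration `(a_1, …, a_{i₀−1}, b_1, …, b_m, a_{i₀+1}, …, a_n)` of `A ⋄ᵢ B`. -/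
theorem marginalVec_gameComp {ι : Type*} [DecidableEq ι]
    (A B : Finset ι) (α β : Finset ι → ℝ)
    (hAB : Disjoint A B) (hα0 : α ∅ = 0) (hβ0 : β ∅ = 0)
    (i : ι) (hi : i ∈ A)
    (lA lB : List ι) (hlA : lA.Nodup) (hlAA : lA.toFinset = A)
    (hlB : lB.Nodup) (hlBB : lB.toFinset = B) :
    ∀ j ∈ A.erase i ∪ B,
      ptensor B i (marginalVec α lA) (marginalVec β lB) j =
        marginalVec (gameComp A B i α β)
          (lA.takeWhile (fun a => decide (a ≠ i)) ++ lB ++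
            (lA.dropWhile (fun a => decide (a ≠ i))).tail) j := by
  intro j hj
  obtain ⟨P, Q, rfl, hP⟩ := List.eq_append_cons_of_mem
    (List.mem_toFinset.1 (hlAA.symm ▸ hi : i ∈ lA.toFinset))
  rw [takeWhile_split P Q i hP, dropWhile_split P Q i hP, List.tail_cons]
  have hsum : ∑ l ∈ B, marginalVec β lB l = β B := by
    rw [← hlBB, marginalVec_sum β lB hlB, hβ0, sub_zero]
  have hA : ∀ x, x ∈ A ↔ x ∈ P ∨ x = i ∨ x ∈ Q := by
    intro x; rw [← hlAA]; simp; tauto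
  have hB : ∀ x, x ∈ B ↔ x ∈ lB := by
    intro x; rw [← hlBB]; simp
  have hd : ∀ x, x ∈ A → x ∉ B := fun x h1 h2 => (Finset.disjoint_left.1 hAB) h1 h2
  have hiQ : i ∉ Q := by
    rw [List.nodup_append] at hlA
    exact (List.nodup_cons.1 hlA.2.1).1
  have hPQ : ∀ x, x ∈ P → x ∉ Q := by
    intro x h1 h2
    rw [List.nodup_append] at hlA
    exact hlA.2.2 x h1 x (by simp [h2]) rfl
  unfold ptensor
  rw [hsum]
  by_cases hjB : j ∈ B
  · rw [if_pos hjB, marginalVec_split α P Q i hP]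
    obtain ⟨p, q, rfl, hp⟩ := List.eq_append_cons_of_mem ((hB j).1 hjB)
    have e : P ++ (p ++ j :: q) ++ Q = (P ++ p) ++ j :: (q ++ Q) := by simp
    have hjP : j ∉ P ++ p := by
      have := hd j
      grind
    rw [e, marginalVec_split _ _ _ j hjP, marginalVec_split β p q j hp]
    have e1 : insert j (P ++ p).toFinset ∩ A = P.toFinset := by
      ext x; have := hd x; have := hA x; have := hB x; simp; grind
    have e2 : (P ++ p).toFinset ∩ A = P.toFinset := by
      ext x; have := hd x; have := hA x; have := hB x; simp; grind
    have e3 : insert j (P ++ p).toFinset ∩ B = insert j p.toFinset := by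
      ext x; have := hd x; have := hA x; have := hB x; simp; grind
    have e4 : (P ++ p).toFinset ∩ B = p.toFinset := by
      ext x; have := hd x; have := hA x; have := hB x; simp; grind
    have e5 : P.toFinset.erase i = P.toFinset := Finset.erase_eq_of_notMem (by simpa using hP)
    unfold gameComp gameDeriv
    rw [e1, e2, e3, e4, e5]
    ring
  · rw [if_neg hjB]
    have hjA : j ≠ i ∧ j ∈ A := by
      simpa [hjB] using hj
    rcases (hA j).1 hjA.2 with h | h | h
    · obtain ⟨p, q, rfl, hp⟩ := List.eq_append_cons_of_mem h
      have e : (p ++ j :: q) ++ lB ++ Q = p ++ j :: (q ++ lB ++ Q) := by simp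
      have e' : (p ++ j :: q) ++ i :: Q = p ++ j :: (q ++ i :: Q) := by simp
      rw [e, e', marginalVec_split _ _ _ j hp, marginalVec_split _ _ _ j hp]
      have e1 : insert j p.toFinset ∩ A = insert j p.toFinset := by
        ext x; have := hA x; simp; grind
      have e2 : p.toFinset ∩ A = p.toFinset := by
        ext x; have := hA x; simp; grind
      have e3 : insert j p.toFinset ∩ B = ∅ := by
        ext x; have := hd x; have := hA x; simp; grind
      have e4 : p.toFinset ∩ B = ∅ := by
        ext x; have := hd x; have := hA x; simp; grind
      unfold gameComp
      rw [e1, e2, e3, e4, hβ0]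
      ring
    · exact absurd h hjA.1
    · have hjP : j ∉ P := fun h' => hPQ j h' h
      obtain ⟨p, q, rfl, hp⟩ := List.eq_append_cons_of_mem h
      have e : P ++ lB ++ (p ++ j :: q) = (P ++ lB ++ p) ++ j :: q := by simp
      have e' : P ++ i :: (p ++ j :: q) = (P ++ i :: p) ++ j :: q := by simp
      have hj1 : j ∉ P ++ lB ++ p := by
        have := hB j; grind
      have hj2 : j ∉ P ++ i :: p := by
        have := hjA.1; grind
      rw [e, e', marginalVec_split _ _ _ j hj1, marginalVec_split _ _ _ j hj2]
      have hip : i ∉ p := by grind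
      have e1 : insert j (P ++ lB ++ p).toFinset ∩ A = insert j (P ++ p).toFinset := by
        ext x; have := hd x; have := hA x; have := hB x; simp; grind
      have e2 : (P ++ lB ++ p).toFinset ∩ A = (P ++ p).toFinset := by
        ext x; have := hd x; have := hA x; have := hB x; simp; grind
      have e3 : insert j (P ++ lB ++ p).toFinset ∩ B = B := by
        ext x; have := hd x; have := hA x; have := hB x; simp; grind
      have e4 : (P ++ lB ++ p).toFinset ∩ B = B := by
        ext x; have := hd x; have := hA x; have := hB x; simp; grind
      have e5 : (insert j (P ++ p).toFinset).erase i = insert j (P ++ p).toFinset :=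
        Finset.erase_eq_of_notMem (by have := hjA.1; simp; grind)
      have e6 : (P ++ p).toFinset.erase i = (P ++ p).toFinset :=
        Finset.erase_eq_of_notMem (by simp; grind)
      have e7 : insert i (insert j (P ++ p).toFinset) = insert j (P ++ i :: p).toFinset := by
        ext x; simp; grind
      have e8 : insert i (P ++ p).toFinset = (P ++ i :: p).toFinset := by
        ext x; simp
      unfold gameComp gameDeriv
      rw [e1, e2, e3, e4, e5, e6, e7, e8]
      ring
end

section
/- Capacities are stable under partial composition: if Γ_A = (A, α) and Γ_B = (B, β) are games on disjoint finite player sets whose coalition functions are non-negative and monotone, and i ∈ A, then the coalition function of the composite game Γ_A ∘_i Γ_B is also non-negative and monotone. -/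
open Finset

/-- Capacities (non-negative monotone games) are stable under partial composition:
if `α` and `β` are non-negative and monotone on coalitions of their player sets,
then so is the coalition function of the composite game `Γ_A ∘ᵢ Γ_B`. -/
theorem capacity_gameComp {ι : Type*} [DecidableEq ι]
    (A B : Finset ι) (α β : Finset ι → ℝ)
    (hAB : Disjoint A B) (hα0 : α ∅ = 0) (hβ0 : β ∅ = 0)
    (hαnn : ∀ S ⊆ A, 0 ≤ α S) (hβnn : ∀ S ⊆ B, 0 ≤ β S)
    (hαm : ∀ S T : Finset ι, S ⊆ T → T ⊆ A → α S ≤ α T)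
    (hβm : ∀ S T : Finset ι, S ⊆ T → T ⊆ B → β S ≤ β T)
    (i : ι) (hi : i ∈ A) :
    (∀ S ⊆ A.erase i ∪ B, 0 ≤ gameComp A B i α β S) ∧
    (∀ S T : Finset ι, S ⊆ T → T ⊆ A.erase i ∪ B →
      gameComp A B i α β S ≤ gameComp A B i α β T) := by
  have hiB : i ∉ B := fun h => (Finset.disjoint_left.mp hAB hi) h
  have key : ∀ S ⊆ A.erase i ∪ B, gameComp A B i α β S =
      (β B - β (S ∩ B)) * α (S ∩ A) + β (S ∩ B) * α (insert i (S ∩ A)) := by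
    intro S hS
    have hiS : i ∉ S ∩ A := by
      intro h
      have := hS (Finset.mem_inter.mp h).1
      simp [hiB] at this
    unfold gameComp gameDeriv
    rw [Finset.erase_eq_of_notMem hiS]
    ring
  have hins : ∀ S : Finset ι, insert i (S ∩ A) ⊆ A := fun S =>
    Finset.insert_subset hi Finset.inter_subset_right
  have hB : ∀ S : Finset ι, β (S ∩ B) ≤ β B := fun S =>
    hβm _ _ Finset.inter_subset_right (Finset.Subset.refl B)
  constructor
  · intro S hS
    rw [key S hS]
    exact add_nonneg
      (mul_nonneg (sub_nonneg.mpr (hB S)) (hαnn _ Finset.inter_subset_right))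
      (mul_nonneg (hβnn _ Finset.inter_subset_right) (hαnn _ (hins S)))
  · intro S T hST hT
    rw [key S (hST.trans hT), key T hT]
    have h1 : α (S ∩ A) ≤ α (T ∩ A) :=
      hαm _ _ (Finset.inter_subset_inter_right hST) Finset.inter_subset_right
    have h2 : α (insert i (S ∩ A)) ≤ α (insert i (T ∩ A)) :=
      hαm _ _ (Finset.insert_subset_insert i (Finset.inter_subset_inter_right hST)) (hins T)
    have h3 : β (S ∩ B) ≤ β (T ∩ B) :=
      hβm _ _ (Finset.inter_subset_inter_right hST) Finset.inter_subset_right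
    have h4 : α (T ∩ A) ≤ α (insert i (T ∩ A)) :=
      hαm _ _ (Finset.subset_insert _ _) (hins T)
    have h5 : 0 ≤ β (S ∩ B) := hβnn _ Finset.inter_subset_right
    have e1 := mul_le_mul_of_nonneg_left h1 (sub_nonneg.mpr (hB S))
    have e2 := mul_le_mul_of_nonneg_left h2 h5
    have e3 := mul_nonneg (sub_nonneg.mpr h3) (sub_nonneg.mpr h4)
    nlinarith [e1, e2, e3]
end

section
/- Convex non-negative games are stable under partial composition: if Γ_A = (A, α) and Γ_B = (B, β) are games on disjoint finite player sets whose coalition functions are non-negative and convex (supermodular), and i ∈ A, then the coalition function of the composite game Γ_A ∘_i Γ_B is also non-negative and convex. -/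
open Finset

/-- Convex (supermodular) non-negative games are stable under partial composition:
if `α` and `β` are non-negative and convex on coalitions of their player sets, then
so is the coalition function of the composite game `Γ_A ∘ᵢ Γ_B`. -/
theorem convex_gameComp {ι : Type*} [DecidableEq ι]
    (A B : Finset ι) (α β : Finset ι → ℝ)
    (hAB : Disjoint A B) (hα0 : α ∅ = 0) (hβ0 : β ∅ = 0)
    (hαnn : ∀ S ⊆ A, 0 ≤ α S) (hβnn : ∀ S ⊆ B, 0 ≤ β S)
    (hαc : ∀ S T : Finset ι, S ⊆ A → T ⊆ A → α S + α T ≤ α (S ∩ T) + α (S ∪ T))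
    (hβc : ∀ S T : Finset ι, S ⊆ B → T ⊆ B → β S + β T ≤ β (S ∩ T) + β (S ∪ T))
    (i : ι) (hi : i ∈ A) :
    (∀ S ⊆ A.erase i ∪ B, 0 ≤ gameComp A B i α β S) ∧
    (∀ S T : Finset ι, S ⊆ A.erase i ∪ B → T ⊆ A.erase i ∪ B →
      gameComp A B i α β S + gameComp A B i α β T ≤
        gameComp A B i α β (S ∩ T) + gameComp A B i α β (S ∪ T)) := by
  have hβm : ∀ X Z : Finset ι, X ⊆ Z → Z ⊆ B → β X ≤ β Z := by
    intro X Z h1 h2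
    have h := hβc X (Z \ X) (h1.trans h2) (sdiff_subset.trans h2)
    have h3 := hβnn (Z \ X) (sdiff_subset.trans h2)
    rw [Finset.inter_sdiff_self, Finset.union_sdiff_of_subset h1, hβ0] at h
    linarith
  have hDm : ∀ P U : Finset ι, P ⊆ U → U ⊆ A → i ∉ U →
      α (insert i P) - α P ≤ α (insert i U) - α U := by
    intro P U h1 h2 h3
    have h := hαc (insert i P) U (Finset.insert_subset hi (h1.trans h2)) h2
    have e1 : insert i P ∩ U = P := by
      rw [Finset.insert_inter_of_notMem h3, Finset.inter_eq_left.2 h1]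
    have e2 : insert i P ∪ U = insert i U := by
      rw [Finset.insert_union, Finset.union_eq_right.2 h1]
    rw [e1, e2] at h
    linarith
  have hD0 : ∀ P : Finset ι, P ⊆ A → i ∉ P → 0 ≤ α (insert i P) - α P := by
    intro P h1 h2
    have h := hDm ∅ P (Finset.empty_subset _) h1 h2
    have h4 := hαnn (insert i ∅) (Finset.insert_subset hi (Finset.empty_subset _))
    rw [hα0] at h
    linarith
  have hiB : i ∉ B := Finset.disjoint_left.1 hAB hi
  have hni : ∀ S : Finset ι, S ⊆ A.erase i ∪ B → i ∉ S ∩ A := by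
    intro S h h1
    have := h (Finset.mem_inter.1 h1).1
    simp [hiB] at this
  have hg : ∀ S : Finset ι, S ⊆ A.erase i ∪ B → gameComp A B i α β S =
      β B * α (S ∩ A) + (α (insert i (S ∩ A)) - α (S ∩ A)) * β (S ∩ B) := by
    intro S h
    simp only [gameComp, gameDeriv]
    rw [Finset.erase_eq_of_notMem (hni S h)]
  constructor
  · intro S h
    rw [hg S h]
    exact add_nonneg (mul_nonneg (hβnn B subset_rfl) (hαnn _ inter_subset_right))
      (mul_nonneg (hD0 _ inter_subset_right (hni S h)) (hβnn _ inter_subset_right))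
  · intro S T hS hT
    have hU := Finset.union_subset hS hT
    have hI : S ∩ T ⊆ A.erase i ∪ B := Finset.inter_subset_left.trans hS
    have nU := hni _ hU
    have nS := hni _ hS
    have nT := hni _ hT
    rw [hg S hS, hg T hT, hg _ hU, hg _ hI]
    have sA : S ∩ A ⊆ A := inter_subset_right
    have tA : T ∩ A ⊆ A := inter_subset_right
    have sB : S ∩ B ⊆ B := inter_subset_right
    have tB : T ∩ B ⊆ B := inter_subset_right
    rw [Finset.inter_inter_distrib_right S T A, Finset.inter_inter_distrib_right S T B,
      Finset.union_inter_distrib_right S T A, Finset.union_inter_distrib_right S T B]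
    rw [Finset.union_inter_distrib_right] at nU
    generalize S ∩ A = P at *
    generalize T ∩ A = Q at *
    generalize S ∩ B = X at *
    generalize T ∩ B = Y at *
    have uA := Finset.union_subset sA tA
    have uB := Finset.union_subset sB tB
    have F := hαc P Q sA tA
    have G := hαc (insert i P) (insert i Q) (Finset.insert_subset hi sA)
      (Finset.insert_subset hi tA)
    have e2 : insert i P ∪ insert i Q = insert i (P ∪ Q) := by
      ext x; simp only [mem_union, mem_insert]; tauto
    rw [← Finset.insert_inter_distrib, e2] at G
    have hc := hβc X Y sB tB
    have m1 := hβm (X ∩ Y) X inter_subset_left sB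
    have m2 := hβm (X ∩ Y) Y inter_subset_right tB
    have m3 := hβm X B sB subset_rfl
    have m0 := hβnn (X ∩ Y) (inter_subset_left.trans sB)
    have d1 := hDm P (P ∪ Q) subset_union_left uA nU
    have d2 := hDm Q (P ∪ Q) subset_union_right uA nU
    have d0 := hD0 (P ∪ Q) uA nU
    have k1 := mul_nonneg d0 (sub_nonneg.2 hc)
    have k2 := mul_nonneg m0 (sub_nonneg.2 G)
    have k3 := mul_nonneg (sub_nonneg.2 m1) (sub_nonneg.2 d1)
    have k4 := mul_nonneg (sub_nonneg.2 m2) (sub_nonneg.2 d2)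
    have k5 := mul_nonneg (sub_nonneg.2 (m1.trans m3)) (sub_nonneg.2 F)
    linarith
end

section
/- For any integer k ≥ 2, k-monotone non-negative games are stable under partial composition: if Γ_A = (A, α) and Γ_B = (B, β) are games on disjoint finite player sets whose coalition functions are non-negative and k-monotone, and i ∈ A, then the coalition function of the composite game Γ_A ∘_i Γ_B is also non-negative and k-monotone. -/
open Finset

/-- A game `(N, v)` is `k`-monotone if for every family of `k` coalitions
`A_1, …, A_k ⊆ N`,
`v(⋃ᵢ Aᵢ) ≥ Σ_{∅ ≠ I ⊆ [k]} (−1)^{|I|+1} v(⋂_{i ∈ I} Aᵢ)`.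
Here `⋂_{t ∈ I} F t` is expressed as `N.filter (fun x => ∀ t ∈ I, x ∈ F t)`. -/
def KMonotone {ι : Type*} [DecidableEq ι] (k : ℕ) (N : Finset ι) (v : Finset ι → ℝ) : Prop :=
  ∀ F : Fin k → Finset ι, (∀ t, F t ⊆ N) →
    ∑ I ∈ Finset.univ.powerset.filter (fun I : Finset (Fin k) => I.Nonempty),
        (-1 : ℝ) ^ (I.card + 1) * v (N.filter (fun x => ∀ t ∈ I, x ∈ F t)) ≤
      v (Finset.univ.sup F)


/-- Difference operator along the meet with `C`. -/
def dlt {ι : Type*} [DecidableEq ι] (C : Finset ι) (v : Finset ι → ℝ) (U : Finset ι) : ℝ :=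
  v U - v (U ∩ C)

/-- Iterated difference operator. -/
def itD {ι : Type*} [DecidableEq ι] : List (Finset ι) → (Finset ι → ℝ) → Finset ι → ℝ
  | [], v => v
  | C :: L, v => itD L (dlt C v)

/-- All iterated differences of order at most `n` are non-negative. -/
def PosD {ι : Type*} [DecidableEq ι] (n : ℕ) (v : Finset ι → ℝ) : Prop :=
  ∀ L : List (Finset ι), L.length ≤ n → ∀ U, 0 ≤ itD L v U

section
variable {ι : Type*} [DecidableEq ι]

theorem itD_add (L : List (Finset ι)) : ∀ (u v : Finset ι → ℝ) (U : Finset ι),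
    itD L (fun S => u S + v S) U = itD L u U + itD L v U := by
  induction L with
  | nil => intro u v U; rfl
  | cons C L ih =>
    intro u v U
    have : dlt C (fun S => u S + v S) = fun S => dlt C u S + dlt C v S := by
      funext S; simp only [dlt]; ring
    simp only [itD]; rw [this, ih]

theorem itD_smul (L : List (Finset ι)) (c : ℝ) : ∀ (u : Finset ι → ℝ) (U : Finset ι),
    itD L (fun S => c * u S) U = c * itD L u U := by
  induction L with
  | nil => intro u U; rfl
  | cons C L ih =>
    intro u U
    have : dlt C (fun S => c * u S) = fun S => c * dlt C u S := by
      funext S; simp only [dlt]; ring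
    simp only [itD]; rw [this, ih]

theorem itD_comp (φ : Finset ι → Finset ι) (hφ : ∀ S T, φ (S ∩ T) = φ S ∩ φ T)
    (L : List (Finset ι)) : ∀ (v : Finset ι → ℝ) (U : Finset ι),
    itD L (fun S => v (φ S)) U = itD (L.map φ) v (φ U) := by
  induction L with
  | nil => intro u U; rfl
  | cons C L ih =>
    intro u U
    have : dlt C (fun S => u (φ S)) = fun S => dlt (φ C) u (φ S) := by
      funext S; simp only [dlt, hφ]
    simp only [itD, List.map_cons]; rw [this, ih]

theorem PosD.comp {n : ℕ} {v : Finset ι → ℝ} (h : PosD n v) (φ : Finset ι → Finset ι)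
    (hφ : ∀ S T, φ (S ∩ T) = φ S ∩ φ T) : PosD n (fun S => v (φ S)) := by
  intro L hL U
  rw [itD_comp φ hφ]
  exact h _ (by simpa using hL) _

theorem PosD.mono {m n : ℕ} {v : Finset ι → ℝ} (h : PosD n v) (hmn : m ≤ n) : PosD m v :=
  fun L hL U => h L (hL.trans hmn) U

theorem PosD.dlt {n : ℕ} {v : Finset ι → ℝ} (h : PosD (n + 1) v) (C : Finset ι) :
    PosD n (dlt C v) :=
  fun L hL U => h (C :: L) (by simpa using hL) U

theorem PosD.meet {n : ℕ} {v : Finset ι → ℝ} (h : PosD n v) (C : Finset ι) :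
    PosD n (fun S => v (S ∩ C)) :=
  h.comp (fun S => S ∩ C) (fun S T => by ext; simp only [Finset.mem_inter]; tauto)

theorem dlt_mul (C : Finset ι) (f g : Finset ι → ℝ) :
    dlt C (fun S => f S * g S) =
      fun S => dlt C f S * g (S ∩ C) + f S * dlt C g S := by
  funext S; simp only [dlt]; ring

theorem itD_mul_nonneg (L : List (Finset ι)) : ∀ (f g : Finset ι → ℝ) (U : Finset ι),
    PosD L.length f → PosD L.length g → 0 ≤ itD L (fun S => f S * g S) U := by
  induction L with
  | nil => intro f g U hf hg; exact mul_nonneg (hf [] (by simp) U) (hg [] (by simp) U)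
  | cons C L ih =>
    intro f g U hf hg
    simp only [itD]
    rw [dlt_mul, itD_add]
    exact add_nonneg (ih _ (fun S => g (S ∩ C)) U (hf.dlt C) ((hg.mono (by simp)).meet C))
      (ih _ _ U (hf.mono (by simp)) (hg.dlt C))

theorem itD_mul_ge (L : List (Finset ι)) : ∀ (f g : Finset ι → ℝ) (U : Finset ι),
    (∀ n, n < L.length → PosD n f) → PosD L.length g →
    ∃ V, itD L f U * g V ≤ itD L (fun S => f S * g S) U := by
  induction L with
  | nil => intro f g U hf hg; exact ⟨U, le_refl _⟩
  | cons C L ih =>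
    intro f g U hf hg
    simp only [itD]
    rw [dlt_mul, itD_add]
    obtain ⟨V, hV⟩ := ih (dlt C f) (fun S => g (S ∩ C)) U
      (fun n hn => (hf (n + 1) (by simpa using hn)).dlt C) ((hg.mono (by simp)).meet C)
    have h2 := itD_mul_nonneg L f (dlt C g) U (hf _ (by simp)) (hg.dlt C)
    exact ⟨V ∩ C, by linarith⟩

theorem itD_replicate (m : ℕ) (L : List (Finset ι)) (v : Finset ι → ℝ) (h0 : v ∅ = 0) :
    itD (List.replicate m ∅ ++ L) v = itD L v := by
  induction m with
  | zero => simp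
  | succ m ih =>
    have : dlt ∅ v = v := by funext S; simp [dlt, h0]
    simp only [List.replicate_succ, List.cons_append, itD]
    rw [this, ih]

theorem itD_eq_sum {τ : Type*} [DecidableEq τ] (F : τ → Finset ι) (l : List τ) :
    ∀ (v : Finset ι → ℝ) (U : Finset ι), l.Nodup →
    itD (l.map F) v U = ∑ I ∈ l.toFinset.powerset,
      (-1 : ℝ) ^ I.card * v (U.filter (fun x => ∀ t ∈ I, x ∈ F t)) := by
  induction l with
  | nil => intro v U _; simp [itD]
  | cons a l ih =>
    intro v U hl
    have ha : a ∉ l.toFinset := by simpa using (List.nodup_cons.1 hl).1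
    rw [List.toFinset_cons, Finset.sum_powerset_insert ha, List.map_cons, itD,
      ih _ _ (List.nodup_cons.1 hl).2, ← Finset.sum_add_distrib]
    refine Finset.sum_congr rfl fun I hI => ?_
    have haI : a ∉ I := fun h => ha (Finset.mem_powerset.1 hI h)
    have e : (U.filter (fun x => ∀ t ∈ I, x ∈ F t)) ∩ F a
        = U.filter (fun x => ∀ t ∈ insert a I, x ∈ F t) := by
      ext x; simp; tauto
    rw [Finset.card_insert_of_notMem haI, ← e, dlt]
    ring

theorem itD_eq {k : ℕ} (N U : Finset ι) (F : Fin k → Finset ι) (hU : U ⊆ N)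
    (hF : ∀ t, F t ⊆ U) (v : Finset ι → ℝ) :
    itD ((List.finRange k).map F) v U = v U -
      ∑ I ∈ Finset.univ.powerset.filter (fun I : Finset (Fin k) => I.Nonempty),
        (-1 : ℝ) ^ (I.card + 1) * v (N.filter (fun x => ∀ t ∈ I, x ∈ F t)) := by
  rw [itD_eq_sum F _ v U (List.nodup_finRange k)]
  have e1 : (List.finRange k).toFinset = (Finset.univ : Finset (Fin k)) := by ext; simp
  rw [e1, ← Finset.sum_filter_add_sum_filter_not _ (fun I : Finset (Fin k) => I.Nonempty)]
  have e2 : (Finset.univ.powerset.filter (fun I : Finset (Fin k) => ¬ I.Nonempty)) = {∅} := by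
    ext I; simp [Finset.not_nonempty_iff_eq_empty]
  rw [e2, Finset.sum_singleton]
  rw [Finset.card_empty, pow_zero, one_mul,
    sub_eq_add_neg, ← Finset.sum_neg_distrib, add_comm]
  refine congrArg₂ (· + ·) (congrArg v (by ext x; simp)) ?_
  refine Finset.sum_congr rfl fun I hI => ?_
  obtain ⟨s, hs⟩ := (Finset.mem_filter.1 hI).2
  have e4 : ∀ X Y : Finset ι, X = Y →
      (-1 : ℝ) ^ I.card * v X = -((-1 : ℝ) ^ (I.card + 1) * v Y) := by
    rintro X _ rfl
    rw [pow_succ]; ring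
  refine e4 _ _ ?_
  ext x
  simp only [Finset.mem_filter]
  exact ⟨fun h => ⟨hU h.1, h.2⟩, fun h => ⟨hF s (h.2 s hs), h.2⟩⟩

theorem kMonotone_iff (k : ℕ) (N : Finset ι) (v : Finset ι → ℝ) :
    KMonotone k N v ↔ ∀ F : Fin k → Finset ι, (∀ t, F t ⊆ N) →
      0 ≤ itD ((List.finRange k).map F) v (Finset.univ.sup F) := by
  unfold KMonotone
  refine forall_congr' fun F => forall_congr' fun hF => ?_
  rw [itD_eq N (Finset.univ.sup F) F (Finset.sup_le fun t _ => hF t)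
    (fun t => Finset.le_sup (f := F) (Finset.mem_univ t)), sub_nonneg]

theorem map_get_finRange {k : ℕ} (L : List (Finset ι)) (h : L.length = k) :
    (List.finRange k).map (fun t => L.get (t.cast h.symm)) = L := by
  subst h
  simp

theorem mono_of_kMonotone {k : ℕ} (hk : 2 ≤ k) {N : Finset ι} {v : Finset ι → ℝ}
    (h0 : v ∅ = 0) (hnn : ∀ S ⊆ N, 0 ≤ v S) (h : KMonotone k N v) {S T : Finset ι}
    (hST : S ⊆ T) (hT : T ⊆ N) : v S ≤ v T := by
  rw [kMonotone_iff] at h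
  have hlen : (List.replicate (k - 2) ∅ ++ [S, T \ S]).length = k := by simp; omega
  have hmem : ∀ t : Fin k, (List.replicate (k - 2) ∅ ++ [S, T \ S]).get (t.cast hlen.symm) ∈
      (List.replicate (k - 2) ∅ ++ [S, T \ S]) := fun t => List.get_mem _ _
  have hsub : ∀ X ∈ (List.replicate (k - 2) ∅ ++ [S, T \ S]), X ⊆ T := by
    intro X hX
    simp only [List.mem_append, List.mem_replicate, List.mem_cons, List.not_mem_nil, or_false] at hX
    rcases hX with ⟨_, rfl⟩ | rfl | rfl
    · simp
    · exact hST
    · exact Finset.sdiff_subset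
  have key := h _ (fun t => (hsub _ (hmem t)).trans hT)
  have hsup : Finset.univ.sup (fun t : Fin k =>
      (List.replicate (k - 2) ∅ ++ [S, T \ S]).get (t.cast hlen.symm)) = T := by
    apply le_antisymm
    · exact Finset.sup_le fun t _ => hsub _ (hmem t)
    · have hall : ∀ X ∈ (List.replicate (k - 2) ∅ ++ [S, T \ S]), X ≤ Finset.univ.sup
          (fun t : Fin k => (List.replicate (k - 2) ∅ ++ [S, T \ S]).get (t.cast hlen.symm)) := by
        intro X hX
        obtain ⟨n, hn⟩ := List.get_of_mem hX
        rw [← hn]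
        exact Finset.le_sup (f := fun t : Fin k =>
          (List.replicate (k - 2) ∅ ++ [S, T \ S]).get (t.cast hlen.symm))
          (Finset.mem_univ (n.cast hlen))
      intro x hx
      by_cases hxS : x ∈ S
      · exact hall S (by simp) hxS
      · exact hall (T \ S) (by simp) (Finset.mem_sdiff.2 ⟨hx, hxS⟩)
  rw [hsup, map_get_finRange _ hlen, itD_replicate _ _ _ h0] at key
  have e1 : T ∩ S = S := Finset.inter_eq_right.2 hST
  have e2 : T ∩ (T \ S) = T \ S := Finset.inter_eq_right.2 Finset.sdiff_subset
  have e3 : T ∩ (T \ S) ∩ S = ∅ := by ext x; simp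
  simp only [itD, dlt] at key
  rw [e3, e1, e2, h0] at key
  have := hnn (T \ S) (Finset.sdiff_subset.trans hT)
  linarith

theorem itD_congr (N : Finset ι) (L : List (Finset ι)) : ∀ (v w : Finset ι → ℝ) (U : Finset ι),
    (∀ S ⊆ N, v S = w S) → U ⊆ N → itD L v U = itD L w U := by
  induction L with
  | nil => intro v w U h hU; exact h U hU
  | cons C L ih =>
    intro v w U h hU
    refine ih _ _ U (fun S hS => ?_) hU
    simp only [dlt]
    rw [h S hS, h _ (Finset.inter_subset_left.trans hS)]

theorem posD_of_kMonotone {k : ℕ} (hk : 2 ≤ k) {N : Finset ι} {v : Finset ι → ℝ}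
    (h0 : v ∅ = 0) (hnn : ∀ S ⊆ N, 0 ≤ v S) (h : KMonotone k N v) :
    PosD k (fun S => v (S ∩ N)) := by
  have main : ∀ L : List (Finset ι), L.length = k → ∀ U, 0 ≤ itD L (fun S => v (S ∩ N)) U := by
    intro L hL U
    have hc : itD L (fun S => v (S ∩ N)) U = itD (L.map (fun S => S ∩ (U ∩ N))) v (U ∩ N) := by
      have e1 := itD_comp (fun S => S ∩ N) (fun S T => by ext; simp only [Finset.mem_inter]; tauto) L v U
      rw [e1]
      have e3 := itD_congr (U ∩ N) (L.map (fun S => S ∩ N)) v (fun S => v (S ∩ (U ∩ N))) (U ∩ N)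
        (fun S hS => by simp only [Finset.inter_eq_left.2 hS]) (Finset.Subset.refl _)
      rw [e3, itD_comp (fun S => S ∩ (U ∩ N)) (fun S T => by ext; simp only [Finset.mem_inter]; tauto), List.map_map]
      simp only [Finset.inter_self]
      congr 1
      refine List.map_congr_left fun S _ => ?_
      ext x; simp only [Function.comp, Finset.mem_inter]; tauto
    rw [hc]
    have hL' : (L.map (fun S => S ∩ (U ∩ N))).length = k := by simpa using hL
    rw [← map_get_finRange _ hL']
    have hsub : ∀ t : Fin k, (L.map (fun S => S ∩ (U ∩ N))).get (t.cast hL'.symm) ⊆ U ∩ N := by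
      intro t
      simp
    rw [itD_eq N (U ∩ N) _ Finset.inter_subset_right hsub, sub_nonneg]
    refine (h _ (fun t => (hsub t).trans Finset.inter_subset_right)).trans ?_
    exact mono_of_kMonotone hk h0 hnn h (Finset.sup_le fun t _ => hsub t) Finset.inter_subset_right
  intro L hL U
  have := main (List.replicate (k - L.length) ∅ ++ L) (by simp; omega) U
  rwa [itD_replicate _ _ _ (by simpa using h0)] at this

end

/-- For every `k ≥ 2`, non-negative `k`-monotone games are stable under partial
composition. -/
theorem kMonotone_gameComp {ι : Type*} [DecidableEq ι]
    (k : ℕ) (hk : 2 ≤ k)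
    (A B : Finset ι) (α β : Finset ι → ℝ)
    (hAB : Disjoint A B) (hα0 : α ∅ = 0) (hβ0 : β ∅ = 0)
    (hαnn : ∀ S ⊆ A, 0 ≤ α S) (hβnn : ∀ S ⊆ B, 0 ≤ β S)
    (hαk : KMonotone k A α) (hβk : KMonotone k B β)
    (i : ι) (hi : i ∈ A) :
    (∀ S ⊆ A.erase i ∪ B, 0 ≤ gameComp A B i α β S) ∧
    KMonotone k (A.erase i ∪ B) (gameComp A B i α β) := by
  have hPα := posD_of_kMonotone hk hα0 hαnn hαk
  have hPβ := posD_of_kMonotone hk hβ0 hβnn hβk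
  have hins : ∀ S T : Finset ι, insert i (S ∩ T) = insert i S ∩ insert i T := by
    intro S T; ext; simp; tauto
  -- the two restrictions of `α`
  have hP1 : PosD k (fun S => α (insert i S ∩ A)) := hPα.comp (fun S => insert i S) hins
  have hP0 : PosD k (fun S => α (S ∩ A.erase i)) := by
    have := hPα.meet (A.erase i)
    have e : ∀ S : Finset ι, S ∩ A.erase i ∩ A = S ∩ A.erase i := by
      intro S; ext; simp only [mem_inter, mem_erase]; tauto
    simpa only [e] using this
  have hPf : PosD (k - 1) (fun S => α (insert i S ∩ A) - α (S ∩ A.erase i)) := by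
    obtain ⟨m, rfl⟩ : ∃ m, k = m + 1 := ⟨k - 1, by omega⟩
    have := (hPα.dlt (A.erase i)).comp (fun S => insert i S) hins
    have e : ∀ S : Finset ι, insert i S ∩ A.erase i ∩ A = S ∩ A.erase i := by
      intro S; ext x; simp only [mem_inter, mem_insert, mem_erase]; tauto
    simpa only [dlt, e, Nat.add_sub_cancel] using this
  have hmonoβ : ∀ S : Finset ι, β (S ∩ B) ≤ β B := fun S =>
    mono_of_kMonotone hk hβ0 hβnn hβk inter_subset_right (Subset.refl B)
  have hw : ∀ S ⊆ A.erase i ∪ B, gameComp A B i α β S =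
      β B * α (S ∩ A.erase i) +
        (α (insert i S ∩ A) - α (S ∩ A.erase i)) * β (S ∩ B) := by
    intro S hS
    have hiS : i ∉ S := by
      intro h
      rcases mem_union.1 (hS h) with h | h
      · simp at h
      · exact (disjoint_left.1 hAB hi) h
    have e1 : S ∩ A = S ∩ A.erase i := by
      ext x; simp only [mem_inter, mem_erase]
      exact ⟨fun h => ⟨h.1, fun hx => hiS (hx ▸ h.1), h.2⟩, fun h => ⟨h.1, h.2.2⟩⟩
    have e2 : insert i (S ∩ A) = insert i S ∩ A := by
      rw [insert_inter_of_mem hi]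
    have e3 : (S ∩ A).erase i = S ∩ A.erase i := by
      rw [inter_erase]
    rw [gameComp, gameDeriv, e2, e3, e1]
  have main : ∀ L : List (Finset ι), L.length ≤ k → ∀ U ⊆ A.erase i ∪ B,
      0 ≤ itD L (gameComp A B i α β) U := by
    intro L hL U hU
    rw [itD_congr _ L _ _ U hw hU, itD_add L (fun S => β B * α (S ∩ A.erase i))
      (fun S => (α (insert i S ∩ A) - α (S ∩ A.erase i)) * β (S ∩ B)), itD_smul]
    obtain ⟨V, hV⟩ := itD_mul_ge L (fun S => α (insert i S ∩ A) - α (S ∩ A.erase i))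
      (fun S => β (S ∩ B)) U (fun n hn => hPf.mono (by omega)) (hPβ.mono hL)
    have hf : itD L (fun S => α (insert i S ∩ A) - α (S ∩ A.erase i)) U =
        itD L (fun S => α (insert i S ∩ A)) U - itD L (fun S => α (S ∩ A.erase i)) U := by
      have := itD_add L (fun S => α (insert i S ∩ A) - α (S ∩ A.erase i))
        (fun S => α (S ∩ A.erase i)) U
      simp only [sub_add_cancel] at this
      linarith
    rw [hf] at hV
    have h1 := hP1 L hL U
    have h0 := hP0 L hL U
    have hb := hmonoβ V
    have hb0 : 0 ≤ β (V ∩ B) := hβnn _ inter_subset_right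
    have m1 := mul_nonneg (sub_nonneg.2 hb) h0
    have m2 := mul_nonneg h1 hb0
    nlinarith
  refine ⟨fun S hS => main [] (by simp) S hS, ?_⟩
  rw [kMonotone_iff]
  intro F hF
  exact main _ (by simp) _ (Finset.sup_le fun t _ => hF t)
end

section
/- Balanced non-negative monotone games are stable under partial composition: if Γ_A = (A, α) and Γ_B = (B, β) are games on disjoint finite player sets whose coalition functions are non-negative, monotone and balanced, and i ∈ A, then the composite game Γ_A ∘_i Γ_B is also non-negative, monotone and balanced. -/
open Finset

/-- A game `(N, v)` is balanced if for every balanced collection `𝓑` of coalitions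
of `N` with weights `l : 𝓑 → (0, 1]` satisfying `Σ_{S ∈ 𝓑} l_S·𝟙^S = 𝟙^N`
(i.e. for every `j ∈ N` the weights of the coalitions containing `j` sum to `1`),
one has `Σ_{S ∈ 𝓑} l_S·v(S) ≤ v(N)`. -/
def BalancedGame {ι : Type*} [DecidableEq ι] (N : Finset ι) (v : Finset ι → ℝ) : Prop :=
  ∀ (𝓑 : Finset (Finset ι)) (l : Finset ι → ℝ),
    (∀ S ∈ 𝓑, S ⊆ N) →
    (∀ S ∈ 𝓑, 0 < l S ∧ l S ≤ 1) →
    (∀ j ∈ N, ∑ S ∈ 𝓑.filter (fun S => j ∈ S), l S = 1) →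
    ∑ S ∈ 𝓑, l S * v S ≤ v N

/-- Balancedness for indexed families with non-negative weights. -/
theorem BalancedGame.indexed {ι κ : Type*} [DecidableEq ι] {N : Finset ι} {v : Finset ι → ℝ}
    (hb : BalancedGame N v) (h0 : v ∅ = 0) (s : Finset κ) (f : κ → Finset ι) (w : κ → ℝ)
    (hf : ∀ k ∈ s, f k ⊆ N) (hw : ∀ k ∈ s, 0 ≤ w k)
    (h1 : ∀ j ∈ N, ∑ k ∈ s, (if j ∈ f k then w k else 0) = 1) :
    ∑ k ∈ s, w k * v (f k) ≤ v N := by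
  set l : Finset ι → ℝ := fun S => ∑ k ∈ s with f k = S, w k with hl
  have hl0 : ∀ S, 0 ≤ l S := fun S =>
    Finset.sum_nonneg fun k hk => hw k (Finset.mem_filter.1 hk).1
  set 𝓑 : Finset (Finset ι) := (s.image f).filter (fun S => S ≠ ∅ ∧ l S ≠ 0) with h𝓑
  have key := hb 𝓑 l ?_ ?_ ?_
  · refine le_trans (le_of_eq ?_) key
    have e1 : ∑ S ∈ 𝓑, l S * v S = ∑ S ∈ s.image f, l S * v S := by
      rw [h𝓑]
      apply Finset.sum_filter_of_ne
      intro S _ hne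
      refine ⟨?_, left_ne_zero_of_mul hne⟩
      rintro rfl
      exact hne (by rw [h0, mul_zero])
    rw [e1, ← Finset.sum_fiberwise_of_maps_to (g := f) (t := s.image f)
      (fun k hk => Finset.mem_image_of_mem f hk)]
    refine Finset.sum_congr rfl fun S _ => ?_
    rw [hl, Finset.sum_mul]
    refine Finset.sum_congr rfl fun k hk => ?_
    rw [(Finset.mem_filter.1 hk).2]
  · intro S hS
    obtain ⟨k, hk, rfl⟩ := Finset.mem_image.1 (Finset.mem_filter.1 hS).1
    exact hf k hk
  · intro S hS
    obtain ⟨hS1, hS2, hS3⟩ := Finset.mem_filter.1 hS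
    refine ⟨lt_of_le_of_ne (hl0 S) (Ne.symm hS3), ?_⟩
    obtain ⟨k, hk, rfl⟩ := Finset.mem_image.1 hS1
    obtain ⟨j, hj⟩ := Finset.nonempty_iff_ne_empty.2 hS2
    rw [← h1 j (hf k hk hj), hl]
    simp only
    rw [Finset.sum_filter]
    refine Finset.sum_le_sum fun k' hk' => ?_
    have := hw k' hk'
    split_ifs with h h' h'
    · exact le_rfl
    · rw [h] at h'; exact absurd hj h'
    · exact this
    · exact le_rfl
  · intro j hj
    have e1 : ∑ S ∈ 𝓑.filter (fun S => j ∈ S), l S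
        = ∑ S ∈ s.image f, if j ∈ S then l S else 0 := by
      rw [Finset.sum_filter, h𝓑]
      apply Finset.sum_filter_of_ne
      intro S _ hne
      by_cases hjS : j ∈ S
      · rw [if_pos hjS] at hne
        exact ⟨Finset.ne_empty_of_mem hjS, hne⟩
      · rw [if_neg hjS] at hne
        exact absurd rfl hne
    rw [e1, ← h1 j hj, ← Finset.sum_fiberwise_of_maps_to (g := f) (t := s.image f)
      (fun k hk => Finset.mem_image_of_mem f hk)]
    refine Finset.sum_congr rfl fun S _ => ?_
    by_cases hjS : j ∈ S
    · rw [if_pos hjS]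
      refine Finset.sum_congr rfl fun k hk => ?_
      rw [(Finset.mem_filter.1 hk).2, if_pos hjS]
    · rw [if_neg hjS]
      symm
      refine Finset.sum_eq_zero fun k hk => ?_
      rw [(Finset.mem_filter.1 hk).2, if_neg hjS]

/-- Non-negative monotone balanced games are stable under partial composition. -/
theorem balanced_gameComp {ι : Type*} [DecidableEq ι]
    (A B : Finset ι) (α β : Finset ι → ℝ)
    (hAB : Disjoint A B) (hα0 : α ∅ = 0) (hβ0 : β ∅ = 0)
    (hαnn : ∀ S ⊆ A, 0 ≤ α S) (hβnn : ∀ S ⊆ B, 0 ≤ β S)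
    (hαm : ∀ S T : Finset ι, S ⊆ T → T ⊆ A → α S ≤ α T)
    (hβm : ∀ S T : Finset ι, S ⊆ T → T ⊆ B → β S ≤ β T)
    (hαb : BalancedGame A α) (hβb : BalancedGame B β)
    (i : ι) (hi : i ∈ A) :
    (∀ S ⊆ A.erase i ∪ B, 0 ≤ gameComp A B i α β S) ∧
    (∀ S T : Finset ι, S ⊆ T → T ⊆ A.erase i ∪ B →
      gameComp A B i α β S ≤ gameComp A B i α β T) ∧
    BalancedGame (A.erase i ∪ B) (gameComp A B i α β) := by
  have hiB : i ∉ B := fun h => (Finset.disjoint_left.1 hAB hi h)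
  have hform : ∀ S ⊆ A.erase i ∪ B, gameComp A B i α β S
      = (β B - β (S ∩ B)) * α (S ∩ A) + β (S ∩ B) * α (insert i (S ∩ A)) := by
    intro S hS
    have : i ∉ S ∩ A := by
      intro h
      have := hS (Finset.mem_inter.1 h).1
      simp [hiB] at this
    simp only [gameComp, gameDeriv, Finset.erase_eq_of_notMem this]
    ring
  have hSA : ∀ S : Finset ι, S ∩ A ⊆ A := fun S => Finset.inter_subset_right
  have hSB : ∀ S : Finset ι, S ∩ B ⊆ B := fun S => Finset.inter_subset_right
  have hiA : ∀ S : Finset ι, insert i (S ∩ A) ⊆ A := fun S =>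
    Finset.insert_subset hi (hSA S)
  have hβle : ∀ S : Finset ι, 0 ≤ β B - β (S ∩ B) := fun S =>
    sub_nonneg.2 (hβm _ _ (hSB S) subset_rfl)
  refine ⟨?_, ?_, ?_⟩
  · intro S hS
    rw [hform S hS]
    exact add_nonneg (mul_nonneg (hβle S) (hαnn _ (hSA S)))
      (mul_nonneg (hβnn _ (hSB S)) (hαnn _ (hiA S)))
  · intro S T hST hT
    rw [hform S (hST.trans hT), hform T hT]
    have a1 := hαm (S ∩ A) (T ∩ A) (Finset.inter_subset_inter_right hST) (hSA T)
    have a2 := hαm (insert i (S ∩ A)) (insert i (T ∩ A))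
      (Finset.insert_subset_insert i (Finset.inter_subset_inter_right hST)) (hiA T)
    have a3 := hαm (T ∩ A) (insert i (T ∩ A)) (Finset.subset_insert _ _) (hiA T)
    have b1 := hβm (S ∩ B) (T ∩ B) (Finset.inter_subset_inter_right hST) (hSB T)
    have c1 := mul_le_mul_of_nonneg_left a1 (hβle S)
    have c2 := mul_le_mul_of_nonneg_left a2 (hβnn _ (hSB S))
    have c3 := mul_nonneg (sub_nonneg.2 a3) (sub_nonneg.2 b1)
    nlinarith
  · intro 𝓑 l hsub hl h1
    have hN : gameComp A B i α β (A.erase i ∪ B) = β B * α A := by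
      rw [hform _ subset_rfl]
      have e1 : (A.erase i ∪ B) ∩ B = B := by
        ext x; simp
      have e2 : insert i ((A.erase i ∪ B) ∩ A) = A := by
        ext x
        simp only [Finset.mem_insert, Finset.mem_inter, Finset.mem_union, Finset.mem_erase]
        constructor
        · rintro (rfl | h)
          · exact hi
          · exact h.2
        · intro h
          by_cases hx : x = i
          · exact Or.inl hx
          · exact Or.inr ⟨Or.inl ⟨hx, h⟩, h⟩
      rw [e1, e2]; ring
    rw [hN]
    have hB := hβb.indexed hβ0 𝓑 (fun S => S ∩ B) l (fun S _ => hSB S)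
      (fun S hS => (hl S hS).1.le) (by
        intro j hj
        rw [← h1 j (Finset.mem_union_right _ hj), Finset.sum_filter]
        exact Finset.sum_congr rfl fun S _ => by simp [hj])
    rcases (hβnn B subset_rfl).eq_or_lt with hz | hpos
    · rw [← hz, zero_mul]
      refine le_of_eq (Finset.sum_eq_zero fun S hS => ?_)
      have h2 : β (S ∩ B) = 0 :=
        le_antisymm (by have := hβle S; linarith) (hβnn _ (hSB S))
      rw [hform S (hsub S hS), h2, ← hz]; ring
    · have hne := hpos.ne'
      set t : Finset ι → ℝ := fun S => β (S ∩ B) / β B with ht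
      have ht0 : ∀ S, 0 ≤ t S := fun S => div_nonneg (hβnn _ (hSB S)) hpos.le
      have ht1 : ∀ S, t S ≤ 1 := fun S =>
        (div_le_one hpos).2 (by have := hβle S; linarith)
      have htβ : ∀ S, β (S ∩ B) = β B * t S := fun S => by
        simp only [ht]; field_simp
      have hsum : ∑ S ∈ 𝓑, l S * t S ≤ 1 := by
        have : β B * ∑ S ∈ 𝓑, l S * t S ≤ β B * 1 := by
          rw [Finset.mul_sum, mul_one]
          refine le_trans (le_of_eq ?_) hB
          refine Finset.sum_congr rfl fun S _ => ?_
          rw [htβ]; ring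
        exact le_of_mul_le_mul_left this hpos
      have hA := hαb.indexed hα0 (Finset.insertNone (𝓑 ×ˢ (Finset.univ : Finset Bool)))
        (fun k => k.elim {i} (fun p => if p.2 then insert i (p.1 ∩ A) else p.1 ∩ A))
        (fun k => k.elim (1 - ∑ S ∈ 𝓑, l S * t S)
          (fun p => if p.2 then l p.1 * t p.1 else l p.1 * (1 - t p.1)))
        (by
          rintro (_ | ⟨S, b⟩) _
          · simpa using hi
          · cases b
            · simp
            · simpa using hiA S)
        (by
          rintro (_ | ⟨S, b⟩) hk
          · simpa using hsum
          · have hS : S ∈ 𝓑 := by simpa using hk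
            cases b
            · simpa using mul_nonneg (hl S hS).1.le (sub_nonneg.2 (ht1 S))
            · simpa using mul_nonneg (hl S hS).1.le (ht0 S))
        (by
          intro j hj
          rw [Finset.sum_insertNone, Finset.sum_product]
          simp only [Fintype.sum_bool, Option.elim_none, Option.elim_some, if_true,
            Bool.false_eq_true, if_false, Finset.mem_singleton, Finset.mem_insert,
            Finset.mem_inter, hj, and_true]
          by_cases hji : j = i
          · subst hji
            have : ∀ S ∈ 𝓑, j ∉ S := by
              intro S hS h
              have := hsub S hS h
              simp [hiB] at this
            have e : ∀ S ∈ 𝓑, (l S * t S + if j ∈ S then l S * (1 - t S) else 0) = l S * t S :=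
              fun S hS => by rw [if_neg (this S hS), add_zero]
            simp only [true_or, if_true]
            rw [Finset.sum_congr rfl e]
            ring
          · have e := h1 j (Finset.mem_union_left _ (Finset.mem_erase.2 ⟨hji, hj⟩))
            rw [Finset.sum_filter] at e
            refine Eq.trans ?_ e
            simp only [hji, if_false, false_or, zero_add]
            refine Finset.sum_congr rfl fun S _ => ?_
            split_ifs
            · ring
            · ring)
      rw [Finset.sum_insertNone, Finset.sum_product] at hA
      simp only [Fintype.sum_bool, Option.elim_none, Option.elim_some, if_true,
            Bool.false_eq_true, if_false] at hA
      have hi0 : 0 ≤ (1 - ∑ S ∈ 𝓑, l S * t S) * α {i} :=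
        mul_nonneg (sub_nonneg.2 hsum) (hαnn _ (by simpa using hi))
      have hA2 := mul_le_mul_of_nonneg_left
        (le_trans (le_add_of_nonneg_left hi0) hA) hpos.le
      refine le_trans (le_of_eq ?_) hA2
      rw [Finset.mul_sum]
      refine Finset.sum_congr rfl fun S hS => ?_
      rw [hform S (hsub S hS), htβ]
      ring
end

section
/- Let Γ_A = (A, α) and Γ_B = (B, β) be non-negative cooperative games on disjoint finite player sets and let i ∈ A. Then: (1) for every imputation x ∈ I(Γ_A) and every imputation y ∈ I(Γ_B), the partial tensor product x ⊗_i y is an imputation of the composite game Γ_A ∘_i Γ_B; and (2) if moreover α({i}) > 0 and β(B) > 0, then the map (x, y) ↦ x ⊗_i y from I(Γ_A) × I(Γ_B) to I(Γ_A ∘_i Γ_B) is injective. -/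
open Finset

/-- `x` is an imputation of the game `(N, v)`: it is a preimputation
(`x(N) = v(N)`) and `x_j ≥ v({j})` for every player `j ∈ N`. -/
def IsImputation {ι : Type*} (N : Finset ι) (v : Finset ι → ℝ) (x : ι → ℝ) : Prop :=
  (∑ j ∈ N, x j) = v N ∧ ∀ j ∈ N, v {j} ≤ x j

/-- (1) The partial tensor product of imputations of the components is an imputation
of the composite game; (2) if `α({i}) > 0` and `β(B) > 0`, the induced map
`I(Γ_A) × I(Γ_B) → I(Γ_A ∘ᵢ Γ_B)` is injective. -/
theorem imputation_ptensor {ι : Type*} [DecidableEq ι]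
    (A B : Finset ι) (α β : Finset ι → ℝ)
    (hAB : Disjoint A B) (hα0 : α ∅ = 0) (hβ0 : β ∅ = 0)
    (hαnn : ∀ S ⊆ A, 0 ≤ α S) (hβnn : ∀ S ⊆ B, 0 ≤ β S)
    (i : ι) (hi : i ∈ A) :
    (∀ x y : ι → ℝ, IsImputation A α x → IsImputation B β y →
      IsImputation (A.erase i ∪ B) (gameComp A B i α β) (ptensor B i x y)) ∧
    (0 < α {i} → 0 < β B →
      ∀ x y x' y' : ι → ℝ,
        IsImputation A α x → IsImputation B β y →
        IsImputation A α x' → IsImputation B β y' →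
        (∀ j ∈ A.erase i ∪ B, ptensor B i x y j = ptensor B i x' y' j) →
        (∀ j ∈ A, x j = x' j) ∧ (∀ j ∈ B, y j = y' j)) := by
  constructor
  · rintro x y ⟨hx, hx'⟩ ⟨hy, hy'⟩
    have hd : Disjoint (A.erase i) B := hAB.mono_left (Finset.erase_subset _ _)
    have hiB : i ∉ B := Finset.disjoint_left.mp hAB hi
    refine ⟨?_, ?_⟩
    · have e1 : (A.erase i ∪ B) ∩ A = A.erase i := by
        ext k
        simp only [Finset.mem_inter, Finset.mem_union, Finset.mem_erase]
        have : k ∈ A → k ∉ B := fun hk => Finset.disjoint_left.mp hAB hk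
        tauto
      have e2 : (A.erase i ∪ B) ∩ B = B := by
        ext k
        simp only [Finset.mem_inter, Finset.mem_union, Finset.mem_erase]
        tauto
      have s1 : ∑ j ∈ A.erase i, ptensor B i x y j = β B * ∑ j ∈ A.erase i, x j := by
        rw [Finset.mul_sum]
        refine Finset.sum_congr rfl fun j hj => ?_
        rw [ptensor, if_neg (Finset.disjoint_left.mp hd hj), hy]
      have s2 : ∑ j ∈ B, ptensor B i x y j = x i * β B := by
        rw [← hy, Finset.mul_sum]
        refine Finset.sum_congr rfl fun j hj => ?_
        rw [ptensor, if_pos hj]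
      have s3 := Finset.add_sum_erase A x hi
      rw [Finset.sum_union hd, s1, s2, gameComp, gameDeriv, e1, e2, Finset.insert_erase hi,
        Finset.erase_idem, ← hx, ← s3]
      ring
    · intro j hj
      rcases Finset.mem_union.mp hj with hj | hj
      · have hjB := Finset.disjoint_left.mp hd hj
        have hjA := Finset.mem_of_mem_erase hj
        rw [gameComp, ptensor, if_neg hjB, hy, Finset.singleton_inter_of_mem hjA,
          Finset.singleton_inter_of_notMem hjB, hβ0, mul_zero, add_zero]
        exact mul_le_mul_of_nonneg_left (hx' j hjA) (hβnn B subset_rfl)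
      · have hjA := Finset.disjoint_right.mp hAB hj
        have h1 := hαnn {i} (Finset.singleton_subset_iff.mpr hi)
        have h2 := hβnn {j} (Finset.singleton_subset_iff.mpr hj)
        have h3 := hx' i hi
        rw [gameComp, gameDeriv, ptensor, if_pos hj, Finset.singleton_inter_of_mem hj,
          Finset.singleton_inter_of_notMem hjA, Finset.erase_empty, hα0, mul_zero, zero_add,
          sub_zero, insert_empty_eq]
        exact mul_le_mul h3 (hy' j hj) h2 (h1.trans h3)
  · rintro hαi hβB x y x' y' ⟨hx, hx1⟩ ⟨hy, _⟩ ⟨hx', _⟩ ⟨hy', _⟩ h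
    have hE : ∀ j ∈ A.erase i, x j = x' j := by
      intro j hj
      have hjB := Finset.disjoint_left.mp hAB (Finset.mem_of_mem_erase hj)
      have := h j (Finset.mem_union_left _ hj)
      rw [ptensor, ptensor, if_neg hjB, if_neg hjB, hy, hy'] at this
      exact mul_left_cancel₀ hβB.ne' this
    have hxi : x i = x' i := by
      have a := Finset.add_sum_erase A x hi
      have b := Finset.add_sum_erase A x' hi
      rw [Finset.sum_congr rfl hE] at a
      linarith
    refine ⟨fun j hj => ?_, fun j hj => ?_⟩
    · by_cases hji : j = i
      · rw [hji, hxi]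
      · exact hE j (Finset.mem_erase.mpr ⟨hji, hj⟩)
    · have := h j (Finset.mem_union_right _ hj)
      rw [ptensor, ptensor, if_pos hj, if_pos hj, ← hxi] at this
      exact mul_left_cancel₀ (hαi.trans_le (hx1 i hi)).ne' this
end

section
/- Let Γ_A = (A, α) and Γ_B = (B, β) be non-negative cooperative games on disjoint finite player sets and let i ∈ A. Then: (1) for every x in the core C(Γ_A) and every y in the core C(Γ_B), the partial tensor product x ⊗_i y lies in the core C(Γ_A ∘_i Γ_B) of the composite game; and (2) if moreover α({i}) > 0 and β(B) > 0, then the map (x, y) ↦ x ⊗_i y from C(Γ_A) × C(Γ_B) to C(Γ_A ∘_i Γ_B) is injective. -/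
open Finset

/-- `x` lies in the core of the game `(N, v)`: `x(N) = v(N)` and `x(S) ≥ v(S)` for
every coalition `S ⊆ N`. -/
def InCore {ι : Type*} (N : Finset ι) (v : Finset ι → ℝ) (x : ι → ℝ) : Prop :=
  (∑ j ∈ N, x j) = v N ∧ ∀ S ⊆ N, v S ≤ ∑ j ∈ S, x j

/-- (1) The partial tensor product of core elements of the components lies in the
core of the composite game; (2) if `α({i}) > 0` and `β(B) > 0`, the induced map
`C(Γ_A) × C(Γ_B) → C(Γ_A ∘ᵢ Γ_B)` is injective. -/
theorem core_ptensor {ι : Type*} [DecidableEq ι]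
    (A B : Finset ι) (α β : Finset ι → ℝ)
    (hAB : Disjoint A B) (hα0 : α ∅ = 0) (hβ0 : β ∅ = 0)
    (hαnn : ∀ S ⊆ A, 0 ≤ α S) (hβnn : ∀ S ⊆ B, 0 ≤ β S)
    (i : ι) (hi : i ∈ A) :
    (∀ x y : ι → ℝ, InCore A α x → InCore B β y →
      InCore (A.erase i ∪ B) (gameComp A B i α β) (ptensor B i x y)) ∧
    (0 < α {i} → 0 < β B →
      ∀ x y x' y' : ι → ℝ,
        InCore A α x → InCore B β y → InCore A α x' → InCore B β y' →
        (∀ j ∈ A.erase i ∪ B, ptensor B i x y j = ptensor B i x' y' j) →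
        (∀ j ∈ A, x j = x' j) ∧ (∀ j ∈ B, y j = y' j)) := by
  have hBA : ∀ j ∈ A, j ∉ B := fun j hj hjB => (Finset.disjoint_left.mp hAB) hj hjB
  have hiB : i ∉ B := hBA i hi
  have hsum : ∀ (x y : ι → ℝ) (T U : Finset ι), T ⊆ A.erase i → U ⊆ B →
      ∑ j ∈ T ∪ U, ptensor B i x y j
        = (∑ l ∈ B, y l) * (∑ j ∈ T, x j) + x i * ∑ j ∈ U, y j := by
    intro x y T U hT hU
    have hd : Disjoint T U :=
      Finset.disjoint_of_subset_left (hT.trans (Finset.erase_subset _ _))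
        (Finset.disjoint_of_subset_right hU hAB)
    rw [Finset.sum_union hd, Finset.mul_sum, Finset.mul_sum]
    congr 1
    · refine Finset.sum_congr rfl fun j hj => ?_
      have : j ∉ B := hBA j (Finset.mem_of_mem_erase (hT hj))
      simp [ptensor, this]
    · refine Finset.sum_congr rfl fun j hj => ?_
      simp [ptensor, hU hj]
  have hcomp : ∀ (T U : Finset ι), T ⊆ A.erase i → U ⊆ B →
      gameComp A B i α β (T ∪ U) = β B * α T + (α (insert i T) - α T) * β U := by
    intro T U hT hU
    have h1 : (T ∪ U) ∩ A = T := by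
      ext j
      have := hBA j
      have := @hT j
      have := @hU j
      simp only [Finset.mem_inter, Finset.mem_union, Finset.mem_erase] at *
      tauto
    have h2 : (T ∪ U) ∩ B = U := by
      ext j
      have := hBA j
      have := @hT j
      have := @hU j
      simp only [Finset.mem_inter, Finset.mem_union, Finset.mem_erase] at *
      tauto
    have h3 : i ∉ T := fun h => Finset.notMem_erase i A (hT h)
    rw [gameComp, gameDeriv, h1, h2, Finset.erase_eq_of_notMem h3]
  have hsx : ∀ x : ι → ℝ, x i + ∑ j ∈ A.erase i, x j = ∑ j ∈ A, x j :=
    fun x => Finset.add_sum_erase A x hi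
  have hxi : ∀ x : ι → ℝ, InCore A α x → α {i} ≤ x i := by
    intro x hx
    simpa using hx.2 {i} (by simpa using hi)
  refine ⟨?_, ?_⟩
  · intro x y hx hy
    refine ⟨?_, ?_⟩
    · rw [hsum x y _ _ subset_rfl subset_rfl, hcomp _ _ subset_rfl subset_rfl,
        Finset.insert_erase hi, hy.1, ← hx.1, ← hsx x]
      ring
    · intro S hS
      obtain ⟨T, U, hT, hU, rfl⟩ : ∃ T U, T ⊆ A.erase i ∧ U ⊆ B ∧ S = T ∪ U :=
        ⟨S ∩ A.erase i, S ∩ B, Finset.inter_subset_right, Finset.inter_subset_right, by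
          rw [← Finset.inter_union_distrib_left, Finset.inter_eq_left.mpr hS]⟩
      rw [hsum x y _ _ hT hU, hcomp _ _ hT hU, hy.1]
      have h3 : i ∉ T := fun h => Finset.notMem_erase i A (hT h)
      have hTA : T ⊆ A := hT.trans (Finset.erase_subset _ _)
      have e1 := hx.2 T hTA
      have e2 := hx.2 (insert i T) (Finset.insert_subset hi hTA)
      rw [Finset.sum_insert h3] at e2
      have e3 := hy.2 U hU
      have e4 : ∑ j ∈ U, y j ≤ β B := by
        rw [← hy.1]
        refine Finset.sum_le_sum_of_subset_of_nonneg hU fun j hj _ => ?_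
        have hs : ({j} : Finset ι) ⊆ B := by simpa using hj
        simpa using (hβnn _ hs).trans (hy.2 _ hs)
      have e5 := hβnn U hU
      have e6 : 0 ≤ x i := (hαnn {i} (by simpa using hi)).trans (hxi x hx)
      have m1 := mul_le_mul_of_nonneg_left e1 (sub_nonneg.mpr (e3.trans e4))
      have m2 := mul_le_mul_of_nonneg_left e2 e5
      have m3 := mul_le_mul_of_nonneg_left e3 e6
      linarith
  · intro ha hb x y x' y' hx hy hx' hy' h
    have k1 : ∀ j ∈ A.erase i, x j = x' j := by
      intro j hj
      have := h j (Finset.mem_union_left _ hj)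
      have hjB := hBA j (Finset.mem_of_mem_erase hj)
      simp only [ptensor, hjB, if_false, hy.1, hy'.1] at this
      exact mul_left_cancel₀ hb.ne' this
    have k2 : x i = x' i := by
      have a1 := hsx x
      have a2 := hsx x'
      rw [hx.1] at a1
      rw [hx'.1, ← Finset.sum_congr rfl k1] at a2
      linarith
    refine ⟨fun j hj => ?_, fun j hj => ?_⟩
    · by_cases hji : j = i
      · rw [hji, k2]
      · exact k1 j (Finset.mem_erase.mpr ⟨hji, hj⟩)
    · have := h j (Finset.mem_union_right _ hj)
      simp only [ptensor, hj, if_true, ← k2] at this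
      exact mul_left_cancel₀ (ha.trans_le (hxi x hx)).ne' this
end

section
/- Let Γ_A = (A, α) and Γ_B = (B, β) be non-negative cooperative games on disjoint finite player sets and let i ∈ A. Suppose that α({i}) = 0, that β({l}) = 0 for every l ∈ B, and that β(B) > 0. Then every element z of the core C(Γ_A ∘_i Γ_B) of the composite game decomposes as z = x ⊗_i y with x ∈ C(Γ_A) and y ∈ I(Γ_B). -/
open Finset

/-- If `α({i}) = 0`, `β({l}) = 0` for all `l ∈ B` and `β(B) > 0`, then every core
element of the composite game decomposes as `x ⊗ᵢ y` with `x ∈ C(Γ_A)` and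
`y ∈ I(Γ_B)`. -/
theorem core_ptensor_decomposition {ι : Type*} [DecidableEq ι]
    (A B : Finset ι) (α β : Finset ι → ℝ)
    (hAB : Disjoint A B) (hα0 : α ∅ = 0) (hβ0 : β ∅ = 0)
    (hαnn : ∀ S ⊆ A, 0 ≤ α S) (hβnn : ∀ S ⊆ B, 0 ≤ β S)
    (i : ι) (hi : i ∈ A)
    (hαi : α {i} = 0) (hβl : ∀ l ∈ B, β {l} = 0) (hβB : 0 < β B) :
    ∀ z : ι → ℝ, InCore (A.erase i ∪ B) (gameComp A B i α β) z →
      ∃ x y : ι → ℝ, InCore A α x ∧ IsImputation B β y ∧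
        ∀ j ∈ A.erase i ∪ B, z j = ptensor B i x y j := by
  intro z hz
  obtain ⟨hzN, hzS⟩ := hz
  have hb : β B ≠ 0 := ne_of_gt hβB
  have hBne : B.Nonempty := by
    rcases B.eq_empty_or_nonempty with h | h
    · exact absurd (h ▸ hβ0 : β B = 0) hb
    · exact h
  have hdis : ∀ j, j ∈ A → j ∉ B := fun j ha hB => (Finset.disjoint_left.mp hAB) ha hB
  have hiB : i ∉ B := hdis i hi
  -- values of the composite game
  have hw1 : ∀ S ⊆ A, i ∈ S → gameComp A B i α β (S.erase i ∪ B) = β B * α S := by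
    intro S hS hiS
    have h1 : (S.erase i ∪ B) ∩ A = S.erase i := by
      ext j
      have := hdis j
      have := @hS j
      simp only [Finset.mem_inter, Finset.mem_union, Finset.mem_erase]
      tauto
    have h2 : (S.erase i ∪ B) ∩ B = B := by
      ext j
      simp only [Finset.mem_inter, Finset.mem_union, Finset.mem_erase]
      tauto
    unfold gameComp gameDeriv
    rw [h1, h2, Finset.insert_erase hiS, Finset.erase_eq_of_notMem (Finset.notMem_erase i S)]
    ring
  have hw2 : ∀ S ⊆ A, gameComp A B i α β S = β B * α S := by
    intro S hS
    have h1 : S ∩ A = S := Finset.inter_eq_left.mpr hS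
    have h2 : S ∩ B = ∅ := Finset.disjoint_iff_inter_eq_empty.mp (hAB.mono_left hS)
    unfold gameComp
    rw [h1, h2, hβ0]
    ring
  have hz0 : ∀ l ∈ B, 0 ≤ z l := by
    intro l hl
    have h := hzS {l} (Finset.singleton_subset_iff.mpr (Finset.mem_union_right _ hl))
    have h1 : ({l} : Finset ι) ∩ A = ∅ := by
      rw [Finset.singleton_inter_of_notMem]
      exact fun ha => hdis l ha hl
    have h2 : ({l} : Finset ι) ∩ B = {l} := Finset.singleton_inter_of_mem hl
    unfold gameComp at h
    rw [h1, h2, hβl l hl, hα0, Finset.sum_singleton] at h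
    linarith
  set x : ι → ℝ := fun j => if j = i then (∑ l ∈ B, z l) / β B else z j / β B with hx
  have hxi : x i = (∑ l ∈ B, z l) / β B := by simp [hx]
  have hxj : ∀ j, j ≠ i → x j = z j / β B := fun j hj => by simp [hx, hj]
  have hsum2 : ∀ S : Finset ι, i ∉ S → ∑ j ∈ S, z j = β B * ∑ j ∈ S, x j := by
    intro S hS
    rw [Finset.mul_sum]
    refine Finset.sum_congr rfl fun j hj => ?_
    rw [hxj j (fun h => hS (h ▸ hj))]
    field_simp
  have hsum1 : ∀ S ⊆ A, i ∈ S → ∑ j ∈ S.erase i ∪ B, z j = β B * ∑ j ∈ S, x j := by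
    intro S hS hiS
    have hd : Disjoint (S.erase i) B := hAB.mono_left ((Finset.erase_subset _ _).trans hS)
    rw [Finset.sum_union hd, hsum2 _ (Finset.notMem_erase i S), ← Finset.sum_erase_add S x hiS,
      hxi]
    field_simp
  have hcore : InCore A α x := by
    constructor
    · rw [hsum1 A subset_rfl hi, hw1 A subset_rfl hi] at hzN
      exact mul_left_cancel₀ hb hzN
    · intro S hS
      refine le_of_mul_le_mul_left ?_ hβB
      by_cases hiS : i ∈ S
      · rw [← hw1 S hS hiS, ← hsum1 S hS hiS]
        exact hzS _ (Finset.union_subset_union_left (Finset.erase_subset_erase i hS))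
      · rw [← hw2 S hS, ← hsum2 S hiS]
        refine hzS _ fun j hj => Finset.mem_union_left _ (Finset.mem_erase.mpr ⟨?_, hS hj⟩)
        exact fun h => hiS (h ▸ hj)
  -- it suffices to find a suitable imputation
  suffices hy : ∃ y : ι → ℝ, IsImputation B β y ∧ ∀ j ∈ B, z j = x i * y j by
    obtain ⟨y, hy, hyz⟩ := hy
    refine ⟨x, y, hcore, hy, fun j hj => ?_⟩
    unfold ptensor
    split_ifs with hjB
    · exact hyz j hjB
    · have hjA : j ∈ A.erase i := (Finset.mem_union.mp hj).resolve_right hjB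
      rw [hy.1, hxj j (Finset.ne_of_mem_erase hjA)]
      field_simp
  by_cases hzB : ∑ l ∈ B, z l = 0
  · have hall := (Finset.sum_eq_zero_iff_of_nonneg hz0).mp hzB
    have hc : (B.card : ℝ) ≠ 0 := by exact_mod_cast hBne.card_pos.ne'
    refine ⟨fun _ => β B / B.card, ⟨?_, fun j hj => ?_⟩, fun j hj => ?_⟩
    · rw [Finset.sum_const, nsmul_eq_mul]
      field_simp
    · rw [hβl j hj]
      positivity
    · rw [hall j hj, hxi, hzB]
      simp
  · have hpos : 0 ≤ ∑ l ∈ B, z l := Finset.sum_nonneg hz0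
    refine ⟨fun l => z l * (β B / ∑ l ∈ B, z l), ⟨?_, fun j hj => ?_⟩, fun j hj => ?_⟩
    · rw [← Finset.sum_mul]
      field_simp
    · rw [hβl j hj]
      exact mul_nonneg (hz0 j hj) (div_nonneg hβB.le hpos)
    · rw [hxi]
      field_simp
end

section
/- Let Γ_A = (A, α) and Γ_B = (B, β) be normalized cooperative games on disjoint finite player sets, let i ∈ A, and let Γ_C = Γ_A ∘_i Γ_B. Then the Shapley value of the composite game is given as follows: for j ∈ B, φ_j(Γ_C) = Σ_{S ⊆ A, i ∈ S} Σ_{T ⊆ B, j ∈ T} μ^α(S)·μ^β(T) / |S ⋄_i T|; and for j ∈ A ∖ {i}, φ_j(Γ_C) = Σ_{S ⊆ A ∖ {i}, j ∈ S} μ^α(S)/|S| + Σ_{S ⊆ A, {i, j} ⊆ S} Σ_{T ⊆ B} μ^α(S)·μ^β(T) / |S ⋄_i T|, where S ⋄_i T = (S ∖ {i}) ∪ T (here the first sum in the second case is the Shapley value of the restriction of Γ_A to A ∖ {i}). -/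
open Finset

/-- The Shapley value of player `j` in the game `(N, v)`:
`φ_j(Γ) = Σ_{S ⊆ N, j ∈ S} μ^v(S)/|S|`. -/
noncomputable def shapley {ι : Type*} [DecidableEq ι]
    (N : Finset ι) (v : Finset ι → ℝ) (j : ι) : ℝ :=
  ∑ S ∈ N.powerset.filter (fun S => j ∈ S), mobius v S / (S.card : ℝ)

theorem aux_sum_union {ι : Type*} [DecidableEq ι] (X Y : Finset ι) (h : Disjoint X Y)
    (f : Finset ι → ℝ) :
    ∑ S ∈ (X ∪ Y).powerset, f S = ∑ P ∈ X.powerset, ∑ T ∈ Y.powerset, f (P ∪ T) := by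
  rw [← Finset.sum_product']
  symm
  refine Finset.sum_nbij' (fun p => p.1 ∪ p.2) (fun S => (S ∩ X, S ∩ Y)) ?_ ?_ ?_ ?_ ?_
  · rintro ⟨P, T⟩ hp
    simp only [mem_product, mem_powerset] at hp ⊢
    exact union_subset_union hp.1 hp.2
  · intro S _
    simp [inter_subset_right]
  · rintro ⟨P, T⟩ hp
    simp only [mem_product, mem_powerset] at hp
    rw [disjoint_left] at h
    ext x <;> have h1 := @hp.1 x <;> have h2 := @hp.2 x <;> have h3 := @h x <;>
      simp only [mem_inter, mem_union] <;> tauto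
  · intro S hS
    simp only [mem_powerset] at hS
    simp only [← inter_union_distrib_left]
    exact inter_eq_left.2 hS
  · intros; rfl

theorem aux_sign {ι : Type*} [DecidableEq ι] (Y : Finset ι) :
    ∑ T ∈ Y.powerset, (-1 : ℝ) ^ (Y.card - T.card) = if Y = ∅ then 1 else 0 := by
  have h := Finset.sum_powerset_neg_one_pow_card (x := Y)
  have h' : ∑ T ∈ Y.powerset, (-1 : ℝ) ^ T.card = if Y = ∅ then 1 else 0 := by
    exact_mod_cast h
  rw [← h']
  refine Finset.sum_nbij' (fun T => Y \ T) (fun T => Y \ T) ?_ ?_ ?_ ?_ ?_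
  · intro T _; simp
  · intro T _; simp
  · intro T hT; simpa using hT
  · intro T hT; simpa using hT
  · intro T hT
    rw [card_sdiff_of_subset (mem_powerset.1 hT)]

theorem aux_insert {ι : Type*} [DecidableEq ι] (α : Finset ι → ℝ) (i : ι) (P : Finset ι)
    (hi : i ∉ P) : mobius α (insert i P) =
      ∑ Q ∈ P.powerset, (-1 : ℝ) ^ (P.card - Q.card) * (α (insert i Q) - α Q) := by
  unfold mobius
  rw [Finset.sum_powerset_insert hi, ← Finset.sum_add_distrib]
  refine Finset.sum_congr rfl fun Q hQ => ?_
  have hQ' := mem_powerset.1 hQ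
  have hc := card_le_card hQ'
  rw [card_insert_of_notMem hi, card_insert_of_notMem (fun h => hi (hQ' h)),
    Nat.add_sub_add_right, Nat.sub_add_comm hc, pow_succ]
  ring

theorem aux_mobius {ι : Type*} [DecidableEq ι]
    (A B : Finset ι) (α β : Finset ι → ℝ) (hAB : Disjoint A B)
    (hβn : β B = 1) (i : ι) (P T : Finset ι) (hP : P ⊆ A.erase i)
    (hT : T ⊆ B) :
    mobius (gameComp A B i α β) (P ∪ T) =
      (if T = ∅ then mobius α P else 0) + mobius α (insert i P) * mobius β T := by
  have hiP : i ∉ P := fun h => by simpa using hP h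
  have hPA : P ⊆ A := hP.trans (erase_subset _ _)
  have hPT : Disjoint P T := disjoint_of_subset_left hPA (disjoint_of_subset_right hT hAB)
  have e : (if T = ∅ then mobius α P else 0) =
      mobius α P * ∑ U ∈ T.powerset, (-1 : ℝ) ^ (T.card - U.card) := by
    rw [aux_sign]; split_ifs <;> simp
  rw [e, aux_insert α i P hiP]
  unfold mobius
  rw [aux_sum_union P T hPT, Finset.sum_mul_sum, Finset.sum_mul_sum, ← Finset.sum_add_distrib]
  refine Finset.sum_congr rfl fun Q hQ => ?_
  rw [← Finset.sum_add_distrib]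
  refine Finset.sum_congr rfl fun U hU => ?_
  rw [mem_powerset] at hQ hU
  have h1 : (Q ∪ U) ∩ A = Q := by
    rw [union_inter_distrib_right, inter_eq_left.2 (hQ.trans hPA),
      disjoint_iff_inter_eq_empty.1 (disjoint_of_subset_left (hU.trans hT) hAB.symm), union_empty]
  have h2 : (Q ∪ U) ∩ B = U := by
    rw [union_inter_distrib_right, inter_eq_left.2 (hU.trans hT),
      disjoint_iff_inter_eq_empty.1 (disjoint_of_subset_left (hQ.trans hPA) hAB), empty_union]
  have hQU : Disjoint Q U := disjoint_of_subset_left hQ (disjoint_of_subset_right hU hPT)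
  unfold gameComp gameDeriv
  rw [h1, h2, hβn, erase_eq_of_notMem (fun h => hiP (hQ h)), card_union_of_disjoint hPT,
    card_union_of_disjoint hQU]
  have c1 := card_le_card hQ
  have c2 := card_le_card hU
  have : P.card + T.card - (Q.card + U.card) = (P.card - Q.card) + (T.card - U.card) := by omega
  rw [this, pow_add]
  ring

/-- The Shapley value of a composite game of two normalized games: for `j ∈ B`,
`φ_j(Γ_C) = Σ_{S ∋ i} Σ_{T ∋ j} μ^α(S)μ^β(T)/|S ⋄ᵢ T|`, and for `j ∈ A ∖ {i}`,
`φ_j(Γ_C) = φ_j(Γ_{A ∖ {i}}) + Σ_{S ⊇ {i,j}} Σ_{T ⊆ B} μ^α(S)μ^β(T)/|S ⋄ᵢ T|`,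
where `S ⋄ᵢ T = (S ∖ {i}) ∪ T`. -/
theorem shapley_gameComp {ι : Type*} [DecidableEq ι]
    (A B : Finset ι) (α β : Finset ι → ℝ)
    (hAB : Disjoint A B) (hα0 : α ∅ = 0) (hβ0 : β ∅ = 0)
    (hαn : α A = 1) (hβn : β B = 1) (i : ι) (hi : i ∈ A) :
    (∀ j ∈ B,
      shapley (A.erase i ∪ B) (gameComp A B i α β) j =
        ∑ S ∈ A.powerset.filter (fun S => i ∈ S),
          ∑ T ∈ B.powerset.filter (fun T => j ∈ T),
            mobius α S * mobius β T / ((S.erase i ∪ T).card : ℝ)) ∧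
    (∀ j ∈ A.erase i,
      shapley (A.erase i ∪ B) (gameComp A B i α β) j =
        (∑ S ∈ (A.erase i).powerset.filter (fun S => j ∈ S),
          mobius α S / (S.card : ℝ)) +
        ∑ S ∈ A.powerset.filter (fun S => i ∈ S ∧ j ∈ S),
          ∑ T ∈ B.powerset,
            mobius α S * mobius β T / ((S.erase i ∪ T).card : ℝ)) := by
  have hd : Disjoint (A.erase i) B := disjoint_of_subset_left (erase_subset _ _) hAB
  have hA : ∀ f : Finset ι → ℝ, (∑ S ∈ A.powerset, if i ∈ S then f S else 0) =
      ∑ P ∈ (A.erase i).powerset, f (insert i P) := by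
    intro f
    conv_lhs => rw [← insert_erase hi]
    rw [Finset.sum_powerset_insert (notMem_erase i A), Finset.sum_eq_zero, zero_add]
    · exact Finset.sum_congr rfl fun P _ => by simp
    · intro P hP
      rw [if_neg]
      intro h
      simpa using mem_powerset.1 hP h
  constructor
  · intro j hj
    unfold shapley
    rw [Finset.sum_filter, Finset.sum_filter, aux_sum_union _ _ hd, hA]
    refine Finset.sum_congr rfl fun P hP => ?_
    rw [Finset.sum_filter]
    refine Finset.sum_congr rfl fun T hT => ?_
    rw [mem_powerset] at hP hT
    have hjP : j ∉ P := fun h => disjoint_left.1 hd (hP h) hj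
    have hiP : i ∉ P := fun h => by simpa using hP h
    rw [aux_mobius A B α β hAB hβn i P T hP hT, erase_insert hiP]
    by_cases hjT : j ∈ T
    · have : T ≠ ∅ := ne_empty_of_mem hjT
      simp [hjT, this]
    · simp [hjT, hjP]
  · intro j hj
    unfold shapley
    rw [Finset.sum_filter, Finset.sum_filter, Finset.sum_filter, aux_sum_union _ _ hd]
    simp only [ite_and]
    rw [hA, ← Finset.sum_add_distrib]
    refine Finset.sum_congr rfl fun P hP => ?_
    rw [mem_powerset] at hP
    have hiP : i ∉ P := fun h => by simpa using hP h
    have hji : j ≠ i := ne_of_mem_erase hj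
    have hjB : j ∉ B := disjoint_left.1 hd hj
    by_cases hjP : j ∈ P
    · have : (if j ∈ P then mobius α P / (P.card : ℝ) else 0) =
          ∑ T ∈ B.powerset, if T = ∅ then mobius α P / (P.card : ℝ) else 0 := by
        simp [hjP]
      rw [this, if_pos (mem_insert_of_mem hjP), ← Finset.sum_add_distrib]
      refine Finset.sum_congr rfl fun T hT => ?_
      rw [mem_powerset] at hT
      rw [aux_mobius A B α β hAB hβn i P T hP hT, erase_insert hiP,
        if_pos (mem_union_left _ hjP), add_div]
      congr 1
      split_ifs with h
      · simp [h]
      · simp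
    · rw [if_neg hjP, if_neg (by simp [hji, hjP]), add_zero]
      refine Finset.sum_eq_zero fun T hT => ?_
      rw [mem_powerset] at hT
      rw [if_neg]
      simp only [mem_union, not_or]
      exact ⟨hjP, fun h => hjB (hT h)⟩
end
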